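/- arXiv:math/0606420 — 2 statements merged into one kernel-verified Lean document; each statement's English description precedes it below -/
import Mathlib

section
/- Let (X, h_i, p_i) be a contracting-on-average iterated function system on a Polish space X (h_i Lipschitz, p_i Dini and bounded away from 0), with invariant measure ν. Let Σ̃ = {1,…,k}^ℤ with the two-sided left shift σ̃, let μ₊ be the measure on Σ = {1,…,k}^ℕ defined by μ₊(E) = ∫_X p_x(E) dν(x), and let μ be the unique σ̃-invariant Borel probability measure on Σ̃ whose marginal on the nonnegative coordinates equals μ₊. Then the measure-preserving system (Σ̃, σ̃, μ) is ergodic. -/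
open MeasureTheory Metric Filter ENNReal NNReal

noncomputable section

variable {k : ℕ}

/-- `hIter h ω n = h_{ω^n} = h_{ω (n-1)} ∘ ⋯ ∘ h_{ω 0}`. -/
def hIter {X : Type*} (h : Fin k → X → X) (ω : ℕ → Fin k) : ℕ → X → X
  | 0 => id
  | n + 1 => fun x => h (ω n) (hIter h ω n x)

/-- `pIter h p ω n x = p_{ω^n}(x) = ∏_{i=1}^n p_{ω_i}(h_{ω^{i-1}}(x))`. -/
def pIter {X : Type*} (h : Fin k → X → X) (p : Fin k → X → ℝ)
    (ω : ℕ → Fin k) : ℕ → X → ℝ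
  | 0 => fun _ => 1
  | n + 1 => fun x => pIter h p ω n x * p (ω n) (hIter h ω n x)

/-- The cylinder `C_{ω^n}` of sequences beginning with the first `n` symbols of `ω`. -/
def cyl (ω : ℕ → Fin k) (n : ℕ) : Set (ℕ → Fin k) := {τ | ∀ i < n, τ i = ω i}

/-!
For a shift-invariant set `A` of one-sided sequences, `x ↦ p_x(A)` is harmonic for the
random walk `x ↦ h_i(x)`. A square-integrable harmonic function is `ν`-a.e. constant
along orbits, so by the Markov property `A` is independent of every cylinder under
`p_x`, and `p_x(A) ∈ {0, 1}` for `ν`-a.e. `x`. Contraction on average improves to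
contraction of `d ^ α` in mean for some small `α > 0`, so the orbits of any two points
driven by the same `p_x`-random sequence approach each other exponentially fast. By
the Dini condition the densities `p_x(C_{ω^n}) / p_y(C_{ω^n})` then stay bounded,
so all the `p_x` have the same null sets: either every `p_x(Aᶜ)` vanishes or
`p_x(A) = 0` for `ν`-a.e. `x`, and `μ₊` is ergodic.

A two-sided shift-invariant measure is determined by its marginal on the nonnegative
coordinates. For an invariant set `A` the marginal of `μ|_A` is invariant and absolutely
continuous with respect to the ergodic `μ₊`, hence a multiple of it, so `μ|_A`
is a multiple of `μ`.
-/

section NullSets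

variable {Ω : Type*} [MeasurableSpace Ω] {μ : Measure Ω}

theorem measure_eq_zero_or_compl_of_restrict_eq_smul {A : Set Ω} (hA : MeasurableSet A) {c : ℝ≥0∞}
    (h : μ.restrict A = c • μ) : μ A = 0 ∨ μ Aᶜ = 0 := by
  have hmul : c * μ Aᶜ = 0 := by
    rw [← smul_eq_mul, ← Measure.smul_apply, ← h, Measure.restrict_apply hA.compl,
      Set.compl_inter_self, measure_empty]
  refine (mul_eq_zero.1 hmul).imp_left fun hc => ?_
  rwa [hc, zero_smul, Measure.restrict_eq_zero] at h

theorem eventuallyConst_ae_of_measure_eq_zero_or_compl {A : Set Ω} (h : μ A = 0 ∨ μ Aᶜ = 0) :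
    EventuallyConst A (ae μ) :=
  eventuallyConst_set'.2 (h.imp ae_eq_empty.2 ae_eq_univ.2)

theorem ae_exists_forall_le_mul_pow {f : ℕ → Ω → ℝ≥0∞} (hf : ∀ n, Measurable (f n))
    {D : ℝ≥0∞} (hD : D ≠ ∞) {r q : ℝ≥0} (hrq : r < q)
    (hfr : ∀ n, ∫⁻ ω, f n ω ∂μ ≤ D * r ^ n) :
    ∀ᵐ ω ∂μ, ∃ C : ℝ≥0, ∀ n, f n ω ≤ C * q ^ n := by
  have hq : (q : ℝ≥0∞) ≠ 0 := by exact_mod_cast (zero_le.trans_lt hrq).ne'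
  have hsum : ∫⁻ ω, ∑' n, f n ω / q ^ n ∂μ ≠ ∞ := by
    rw [lintegral_tsum fun n => ((hf n).div_const _).aemeasurable]
    refine ne_top_of_le_ne_top (b := ∑' n, D * ((r : ℝ≥0∞) / q) ^ n) ?_
      (ENNReal.tsum_le_tsum fun n => ?_)
    · rw [ENNReal.tsum_mul_left, ENNReal.tsum_geometric]
      refine ENNReal.mul_ne_top hD (ENNReal.inv_ne_top.2 (tsub_pos_of_lt ?_).ne')
      exact ENNReal.div_lt_of_lt_mul (by rw [one_mul]; exact_mod_cast hrq)
    · simp_rw [div_eq_mul_inv, lintegral_mul_const _ (hf n), mul_pow, ENNReal.inv_pow, ← mul_assoc]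
      gcongr
      exact hfr n
  filter_upwards [ae_lt_top (Measurable.tsum fun n => (hf n).div_const _) hsum] with ω hω
  refine ⟨(∑' n, f n ω / q ^ n).toNNReal, fun n => ?_⟩
  rw [ENNReal.coe_toNNReal hω.ne, ← ENNReal.div_le_iff (pow_ne_zero n hq) (by finiteness)]
  exact ENNReal.le_tsum n

end NullSets

section Cylinders

variable {E : ℕ → Type*}

theorem isPiSystem_cylinder :
    IsPiSystem {s : Set (∀ n, E n) | ∃ x n, s = PiNat.cylinder x n} := by
  rintro _ ⟨x, n, rfl⟩ _ ⟨y, m, rfl⟩ ⟨z, hzx, hzy⟩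
  rw [← PiNat.mem_cylinder_iff_eq.1 hzx, ← PiNat.mem_cylinder_iff_eq.1 hzy]
  rcases le_total n m with hnm | hmn
  · exact ⟨z, m, Set.inter_eq_right.2 (PiNat.cylinder_anti z hnm)⟩
  · exact ⟨z, n, Set.inter_eq_left.2 (PiNat.cylinder_anti z hmn)⟩

variable [∀ n, TopologicalSpace (E n)] [∀ n, DiscreteTopology (E n)]

variable [∀ n, MeasurableSpace (E n)]

theorem measurable_of_forall_cylinder [OpensMeasurableSpace (∀ n, E n)] {Y : Type*}
    [MeasurableSpace Y] {F : (∀ n, E n) → Y} (n : ℕ)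
    (hF : ∀ x, ∀ y ∈ PiNat.cylinder x n, F y = F x) : Measurable F :=
  fun s _ => ((IsLocallyConstant.iff_exists_open F).2 (fun x =>
    ⟨PiNat.cylinder x n, PiNat.isOpen_cylinder E x n, PiNat.self_mem_cylinder x n, hF x⟩)
    s).measurableSet

theorem measurableSet_cylinder [OpensMeasurableSpace (∀ n, E n)] (x : ∀ n, E n) (n : ℕ) :
    MeasurableSet (PiNat.cylinder x n) :=
  (PiNat.isOpen_cylinder E x n).measurableSet

variable [∀ n, Countable (E n)] [∀ n, BorelSpace (E n)]

theorem measurableSpace_pi_eq_generateFrom_cylinder :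
    (MeasurableSpace.pi : MeasurableSpace (∀ n, E n)) =
      MeasurableSpace.generateFrom {s | ∃ x n, s = PiNat.cylinder x n} :=
  BorelSpace.measurable_eq.trans (PiNat.isTopologicalBasis_cylinders E).borel_eq_generateFrom

theorem measure_ext_of_cylinder {m₁ m₂ : Measure (∀ n, E n)} [IsFiniteMeasure m₁]
    (H : ∀ x n, m₁ (PiNat.cylinder x n) = m₂ (PiNat.cylinder x n)) : m₁ = m₂ := by
  rcases isEmpty_or_nonempty (∀ n, E n) with _ | ⟨⟨x⟩⟩
  · rw [Measure.eq_zero_of_isEmpty m₁, Measure.eq_zero_of_isEmpty m₂]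
  refine ext_of_generate_finite _ measurableSpace_pi_eq_generateFrom_cylinder isPiSystem_cylinder
    ?_ ?_
  · rintro _ ⟨x, n, rfl⟩
    exact H x n
  · simpa only [PiNat.cylinder_zero] using H x 0

theorem measure_setOf_cylinder_subset_le {m₁ m₂ : Measure (∀ n, E n)}
    (H : ∀ x n, m₁ (PiNat.cylinder x n) ≤ m₂ (PiNat.cylinder x n)) (U : Set (∀ n, E n)) (n : ℕ) :
    m₁ {x | PiNat.cylinder x n ⊆ U} ≤ m₂ {x | PiNat.cylinder x n ⊆ U} := by
  let π : (∀ n, E n) → ∀ i : Finset.range n, E i := (Finset.range n).restrict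
  have hfiber : ∀ x, π ⁻¹' {π x} = PiNat.cylinder x n := by
    intro x
    ext y
    simp [π, PiNat.cylinder, funext_iff]
  have himage : π ⁻¹' (π '' {x | PiNat.cylinder x n ⊆ U}) = {x | PiNat.cylinder x n ⊆ U} := by
    refine (Set.subset_preimage_image _ _).antisymm' ?_
    rintro y ⟨x, hx, hxy⟩
    have : y ∈ PiNat.cylinder x n := hfiber x ▸ hxy.symm
    rwa [Set.mem_ofPred_eq, PiNat.mem_cylinder_iff_eq.1 this]
  have hmeas : ∀ y ∈ π '' {x | PiNat.cylinder x n ⊆ U}, MeasurableSet (π ⁻¹' {y}) := by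
    rintro _ ⟨x, -, rfl⟩
    exact hfiber x ▸ measurableSet_cylinder x n
  rw [← himage, ← tsum_measure_preimage_singleton (Set.to_countable _) hmeas,
    ← tsum_measure_preimage_singleton (Set.to_countable _) hmeas]
  refine ENNReal.tsum_le_tsum ?_
  rintro ⟨_, x, -, rfl⟩
  exact hfiber x ▸ H x n

theorem measure_le_of_isOpen_of_cylinder {m₁ m₂ : Measure (∀ n, E n)}
    (H : ∀ x n, m₁ (PiNat.cylinder x n) ≤ m₂ (PiNat.cylinder x n))
    {U : Set (∀ n, E n)} (hU : IsOpen U) : m₁ U ≤ m₂ U := by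
  have hUnion : U = ⋃ n, {x | PiNat.cylinder x n ⊆ U} := by
    ext x
    rw [Set.mem_iUnion]
    refine ⟨fun hx => ?_, fun ⟨n, hn⟩ => hn (PiNat.self_mem_cylinder x n)⟩
    obtain ⟨_, ⟨y, n, rfl⟩, hxy, hyU⟩ :=
      (PiNat.isTopologicalBasis_cylinders E).exists_subset_of_mem_open hx hU
    exact ⟨n, (PiNat.mem_cylinder_iff_eq.1 hxy).trans_subset hyU⟩
  have hmono : Monotone fun n => {x : ∀ n, E n | PiNat.cylinder x n ⊆ U} :=
    fun n m hnm x hx => (PiNat.cylinder_anti x hnm).trans hx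
  rw [hUnion, hmono.measure_iUnion, hmono.measure_iUnion]
  exact iSup_mono fun n => measure_setOf_cylinder_subset_le H U n

theorem measure_le_of_cylinder {m₁ m₂ : Measure (∀ n, E n)} [m₂.OuterRegular]
    (H : ∀ x n, m₁ (PiNat.cylinder x n) ≤ m₂ (PiNat.cylinder x n)) : m₁ ≤ m₂ := by
  refine Measure.le_iff'.2 fun A => ?_
  rw [A.measure_eq_iInf_isOpen m₂]
  exact le_iInf fun U => le_iInf fun hAU => le_iInf fun hU =>
    (measure_mono hAU).trans (measure_le_of_isOpen_of_cylinder H hU)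

theorem absolutelyContinuous_of_ae_cylinder_le {m₁ m₂ : Measure (∀ n, E n)} [IsFiniteMeasure m₂]
    (H : ∀ᵐ x ∂m₁, ∃ K : ℝ≥0, ∀ n, m₁ (PiNat.cylinder x n) ≤ K * m₂ (PiNat.cylinder x n)) :
    m₁ ≪ m₂ := by
  let B (K : ℕ) : Set (∀ n, E n) :=
    {x | ∀ n, m₁ (PiNat.cylinder x n) ≤ K * m₂ (PiNat.cylinder x n)}
  have hB : ∀ K, MeasurableSet (B K) := fun K => by
    have hmeas (m : Measure (∀ n, E n)) (n : ℕ) : Measurable fun x => m (PiNat.cylinder x n) :=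
      measurable_of_forall_cylinder n fun x y hy => by rw [PiNat.mem_cylinder_iff_eq.1 hy]
    exact measurableSet_setOfPred.2 <| Measurable.forall fun n =>
      measurableSet_setOfPred.1 (measurableSet_le (hmeas m₁ n) ((hmeas m₂ n).const_mul _))
  have hle : ∀ K, m₁.restrict (B K) ≤ (K : ℝ≥0) • m₂ := fun K => by
    refine measure_le_of_cylinder fun x n => ?_
    rw [Measure.restrict_apply (measurableSet_cylinder x n)]
    rcases (PiNat.cylinder x n ∩ B K).eq_empty_or_nonempty with hempty | ⟨y, hyx, hyB⟩
    · simp [hempty]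
    · rw [← PiNat.mem_cylinder_iff_eq.1 hyx]
      exact (measure_mono Set.inter_subset_left).trans (hyB n)
  intro A hA
  have hAB : ∀ K, m₁ (A ∩ B K) = 0 := fun K => by
    rw [← Measure.restrict_apply' (hB K)]
    exact nonpos_iff_eq_zero.1 ((hle K A).trans (by simp [hA]))
  rw [measure_eq_zero_iff_ae_notMem]
  filter_upwards [H, ae_all_iff.2 fun K => measure_eq_zero_iff_ae_notMem.1 (hAB K)]
    with x ⟨K, hK⟩ hx hxA
  obtain ⟨N, hN⟩ := exists_nat_ge K
  exact hx N ⟨hxA, fun n => (hK n).trans (by gcongr; exact_mod_cast hN)⟩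

end Cylinders

section Shift

/-- The left shift `(σ ω) i = ω (i + 1)`, both on one-sided sequences (`ι = ℕ`) and on two-sided
ones (`ι = ℤ`). -/
def leftShift {ι α : Type*} [Add ι] [One ι] (ω : ι → α) : ι → α :=
  fun i => ω (i + 1)

/-- The projection of a two-sided sequence to its coordinates `0, 1, 2, …`. -/
def nonnegPart {α : Type*} (ω : ℤ → α) : ℕ → α :=
  fun n => ω n

theorem iterate_leftShift_apply {ι α : Type*} [AddMonoidWithOne ι] (ω : ι → α) (n : ℕ) (i : ι) :
    leftShift^[n] ω i = ω (i + n) := by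
  induction n generalizing i with
  | zero => simp
  | succ n ih =>
    rw [Function.iterate_succ_apply', leftShift, ih, add_assoc, ← Nat.cast_one, ← Nat.cast_add,
      Nat.add_comm]

theorem semiconj_nonnegPart_leftShift {α : Type*} :
    Function.Semiconj (nonnegPart (α := α)) leftShift leftShift :=
  fun _ => rfl

variable {α : Type*} [MeasurableSpace α]

theorem measurable_leftShift {ι : Type*} [Add ι] [One ι] :
    Measurable (leftShift : (ι → α) → ι → α) :=
  measurable_pi_lambda _ fun _ => measurable_pi_apply _

theorem measurable_nonnegPart : Measurable (nonnegPart (α := α)) :=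
  measurable_pi_lambda _ fun _ => measurable_pi_apply _

theorem measurePreserving_leftShift_map_nonnegPart {μ : Measure (ℤ → α)}
    (hμ : MeasurePreserving leftShift μ μ) :
    MeasurePreserving leftShift (μ.map nonnegPart) (μ.map nonnegPart) :=
  (measurable_nonnegPart.measurePreserving μ).of_semiconj hμ semiconj_nonnegPart_leftShift
    measurable_leftShift

-- Shifting by `N` moves all coordinates in `I` into the nonnegative half-line.
theorem map_restrict_eq_map_map_nonnegPart {μ : Measure (ℤ → α)}
    (hμ : MeasurePreserving leftShift μ μ) {I : Finset ℤ} {N : ℕ} (hN : ∀ i ∈ I, 0 ≤ i + (N : ℤ)) :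
    μ.map I.restrict = (μ.map nonnegPart).map fun ω (i : I) => ω ((i : ℤ) + N).toNat := by
  conv_lhs => rw [← (hμ.iterate N).map_eq]
  rw [Measure.map_map I.measurable_restrict (hμ.iterate N).measurable,
    Measure.map_map (measurable_pi_lambda _ fun _ => measurable_pi_apply _) measurable_nonnegPart]
  congr 1
  ext ω i
  simp only [Function.comp_apply, Finset.restrict, iterate_leftShift_apply, nonnegPart,
    Int.toNat_of_nonneg (hN i i.2)]

theorem eq_of_map_nonnegPart_eq {μ₁ μ₂ : Measure (ℤ → α)} [IsFiniteMeasure μ₂]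
    (h₁ : MeasurePreserving leftShift μ₁ μ₁) (h₂ : MeasurePreserving leftShift μ₂ μ₂)
    (h : μ₁.map nonnegPart = μ₂.map nonnegPart) : μ₁ = μ₂ := by
  refine IsProjectiveLimit.unique (P := fun I => μ₂.map I.restrict) (fun I => ?_) fun _ => rfl
  obtain ⟨N, hN⟩ : ∃ N : ℕ, ∀ i ∈ I, 0 ≤ i + (N : ℤ) := by
    refine ⟨I.sup Int.natAbs, fun i hi => ?_⟩
    have := Finset.le_sup (f := Int.natAbs) hi
    omega
  exact (map_restrict_eq_map_map_nonnegPart h₁ hN).trans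
    (h ▸ (map_restrict_eq_map_map_nonnegPart h₂ hN).symm)

theorem ergodic_leftShift_of_preErgodic_map_nonnegPart {μ : Measure (ℤ → α)} [IsFiniteMeasure μ]
    (hμ : MeasurePreserving leftShift μ μ)
    (hplus : PreErgodic leftShift (μ.map nonnegPart)) : Ergodic leftShift μ := by
  refine ⟨hμ, ⟨fun A hA hAinv => eventuallyConst_ae_of_measure_eq_zero_or_compl ?_⟩⟩
  have hrestrict : MeasurePreserving leftShift (μ.restrict A) (μ.restrict A) := by
    simpa only [hAinv] using hμ.restrict_preimage hA
  have hergodic : Ergodic leftShift (μ.map nonnegPart) :=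
    ⟨measurePreserving_leftShift_map_nonnegPart hμ, hplus⟩
  obtain ⟨c, hc⟩ := hergodic.eq_smul_of_absolutelyContinuous
    (measurePreserving_leftShift_map_nonnegPart hrestrict)
    (Measure.absolutelyContinuous_of_le Measure.restrict_le_self |>.map measurable_nonnegPart)
  refine measure_eq_zero_or_compl_of_restrict_eq_smul hA (c := c) ?_
  refine (eq_of_map_nonnegPart_eq (hμ.smul_measure c) hrestrict ?_).symm
  rw [Measure.map_smul, hc]

end Shift

section Dini

theorem summable_comp_mul_pow_of_summable_half_pow {w : ℝ → ℝ} (hw : Monotone w) (hw0 : 0 ≤ w 0)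
    (hsum : Summable fun n : ℕ => w ((1 / 2 : ℝ) ^ (n + 1))) {C s : ℝ} (hC : 0 ≤ C)
    (hs0 : 0 ≤ s) (hs1 : s < 1) : Summable fun n : ℕ => w (C * s ^ n) := by
  obtain ⟨m, hm⟩ := exists_pow_lt_of_lt_one one_half_pos hs1
  obtain ⟨q, hq⟩ := exists_pow_lt_of_lt_one (show (0 : ℝ) < 1 / (C + 1) by positivity)
    one_half_lt_one
  have hCq : C * (1 / 2) ^ q ≤ 1 := by
    rw [lt_div_iff₀ (by positivity)] at hq
    linarith [pow_nonneg (one_half_pos (α := ℝ)).le q]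
  have hm0 : NeZero m := ⟨by rintro rfl; norm_num at hm⟩
  have hanti : Antitone fun n : ℕ => w (C * s ^ n) := fun i j hij =>
    hw (mul_le_mul_of_nonneg_left (pow_le_pow_of_le_one hs0 hs1.le hij) hC)
  -- It is enough to sum over the multiples of `m`, where `s ^ (m * n) ≤ 2⁻ⁿ`.
  rw [← summable_indicator_mod_iff hanti (0 : ZMod m),
    ← (mul_right_injective₀ hm0.out).summable_iff, ← _root_.summable_nat_add_iff (q + 1)]
  · refine Summable.of_nonneg_of_le (fun n => ?_) (fun n => ?_) hsum
    · exact Set.indicator_nonneg (fun _ _ => hw0.trans (hw (by positivity))) _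
    · refine (Set.indicator_le_self' (fun _ _ => hw0.trans (hw (by positivity))) _).trans (hw ?_)
      calc C * s ^ (m * (n + (q + 1))) = C * (s ^ m) ^ (q + (n + 1)) := by
            rw [← pow_mul]; ring_nf
        _ ≤ C * (1 / 2) ^ (q + (n + 1)) := by gcongr
        _ = C * (1 / 2) ^ q * (1 / 2) ^ (n + 1) := by rw [pow_add, mul_assoc]
        _ ≤ (1 / 2) ^ (n + 1) := mul_le_of_le_one_left (by positivity) hCq
  · intro n hn
    refine Set.indicator_of_notMem (fun hmem => hn ?_) _
    obtain ⟨j, rfl⟩ := (ZMod.natCast_eq_zero_iff n m).1 hmem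
    exact ⟨j, rfl⟩

variable {X : Type*} [PseudoMetricSpace X] {f : X → ℝ}

/-- Dini continuity: `f` has a monotone modulus of continuity `w` with `∑ w(2⁻ⁿ) < ∞`. -/
def IsDini (f : X → ℝ) : Prop :=
  ∃ w : ℝ → ℝ, Monotone w ∧ (∀ x y, |f x - f y| ≤ w (dist x y)) ∧
    Summable fun n : ℕ => w ((1 / 2 : ℝ) ^ (n + 1))

theorem IsDini.continuous (hf : IsDini f) : Continuous f := by
  obtain ⟨w, hw, hfw, hsum⟩ := hf
  refine Metric.continuous_iff.2 fun x ε hε => ?_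
  obtain ⟨n, hn⟩ := (hsum.tendsto_atTop_zero.eventually_lt_const hε).exists
  exact ⟨(1 / 2) ^ (n + 1), by positivity, fun y hy =>
    ((hfw y x).trans (hw hy.le)).trans_lt hn⟩

theorem IsDini.summable_abs_sub (hf : IsDini f) {x y : ℕ → X} {C s : ℝ} (hs0 : 0 ≤ s)
    (hs1 : s < 1) (hxy : ∀ n, dist (x n) (y n) ≤ C * s ^ n) :
    Summable fun n => |f (x n) - f (y n)| := by
  obtain ⟨w, hw, hfw, hsum⟩ := hf
  have hw0 : 0 ≤ w 0 := by simpa using hfw (x 0) (x 0)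
  have hC : 0 ≤ C := dist_nonneg.trans (by simpa using hxy 0)
  exact Summable.of_nonneg_of_le (fun _ => abs_nonneg _)
    (fun n => (hfw _ _).trans (hw (hxy n)))
    (summable_comp_mul_pow_of_summable_half_pow hw hw0 hsum hC hs0 hs1)

end Dini

theorem exists_forall_prod_range_le_mul_prod_range {a b ε : ℕ → ℝ} {δ : ℝ} (hδ : 0 < δ)
    (ha : ∀ n, 0 ≤ a n) (hb : ∀ n, δ ≤ b n) (hab : ∀ n, a n ≤ b n + ε n) (hε0 : ∀ n, 0 ≤ ε n)
    (hε : Summable ε) :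
    ∃ K : ℝ, ∀ n, ∏ i ∈ Finset.range n, a i ≤ K * ∏ i ∈ Finset.range n, b i := by
  have hfactor : ∀ n, a n ≤ Real.exp (ε n / δ) * b n := fun n => by
    have hεb : ε n ≤ ε n / δ * b n := by
      rw [div_mul_eq_mul_div, le_div_iff₀ hδ]
      exact mul_le_mul_of_nonneg_left (hb n) (hε0 n)
    calc a n ≤ (ε n / δ + 1) * b n := by linarith [hab n]
      _ ≤ Real.exp (ε n / δ) * b n :=
        mul_le_mul_of_nonneg_right (Real.add_one_le_exp _) (hδ.le.trans (hb n))
  refine ⟨Real.exp (∑' n, ε n / δ), fun n => ?_⟩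
  calc ∏ i ∈ Finset.range n, a i
      ≤ ∏ i ∈ Finset.range n, (Real.exp (ε i / δ) * b i) :=
        Finset.prod_le_prod (fun i _ => ha i) fun i _ => hfactor i
    _ = Real.exp (∑ i ∈ Finset.range n, ε i / δ) * ∏ i ∈ Finset.range n, b i := by
        rw [Finset.prod_mul_distrib, Real.exp_sum]
    _ ≤ Real.exp (∑' n, ε n / δ) * ∏ i ∈ Finset.range n, b i := by
        gcongr
        · exact Finset.prod_nonneg fun i _ => hδ.le.trans (hb i)
        · exact (hε.div_const δ).sum_le_tsum _ fun i _ => div_nonneg (hε0 i) hδ.le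

section FractionalMoment

variable {ι : Type*} [Fintype ι]

theorem sum_mul_max_neg_le_neg {q u : ι → ℝ} {δ l b M : ℝ} (hδ : 0 ≤ δ) (hq : ∀ i, δ ≤ q i)
    (hqsum : ∑ i, q i = 1) (hl : 0 ≤ l) (hul : ∀ i, u i ≤ l) (hM : 0 ≤ M) (hδM : l + b ≤ δ * M)
    (hmean : ∑ i, q i * u i ≤ -b) : ∑ i, q i * max (u i) (-M) ≤ -b := by
  classical
  by_cases htrunc : ∃ j, u j < -M
  · obtain ⟨j, hj⟩ := htrunc
    have hq0 : ∀ i, 0 ≤ q i := fun i => hδ.trans (hq i)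
    have hmax : ∀ i, max (u i) (-M) ≤ l - if i = j then l + M else 0 := fun i => by
      split_ifs with hij
      · subst hij
        rw [max_eq_right hj.le]
        linarith
      · exact max_le (by linarith [hul i]) (by linarith)
    calc ∑ i, q i * max (u i) (-M) ≤ ∑ i, q i * (l - if i = j then l + M else 0) :=
          Finset.sum_le_sum fun i _ => mul_le_mul_of_nonneg_left (hmax i) (hq0 i)
      _ = l - q j * (l + M) := by
          simp [mul_sub, Finset.sum_sub_distrib, ← Finset.sum_mul, hqsum]
      _ ≤ -b := by nlinarith [mul_le_mul_of_nonneg_right (hq j) hM, mul_nonneg (hq0 j) hl]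
  · push Not at htrunc
    simpa only [max_eq_left (htrunc _)] using hmean

theorem sum_mul_exp_le_of_abs_le {q t : ι → ℝ} {M b α : ℝ} (hq : ∀ i, 0 ≤ q i)
    (hqsum : ∑ i, q i = 1) (htM : ∀ i, |t i| ≤ M) (hmean : ∑ i, q i * t i ≤ -b) (hα : 0 ≤ α)
    (hαM : α * M ≤ 1) : ∑ i, q i * Real.exp (α * t i) ≤ 1 - α * b + (α * M) ^ 2 := by
  have hexp : ∀ i, Real.exp (α * t i) ≤ 1 + α * t i + (α * M) ^ 2 := fun i => by
    have habs : |α * t i| ≤ α * M := by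
      rw [abs_mul, abs_of_nonneg hα]
      exact mul_le_mul_of_nonneg_left (htM i) hα
    have htaylor := (abs_le.1 (Real.abs_exp_sub_one_sub_id_le (habs.trans hαM))).2
    linarith [sq_le_sq' (neg_le_of_abs_le habs) (le_of_abs_le habs)]
  calc ∑ i, q i * Real.exp (α * t i) ≤ ∑ i, q i * (1 + α * t i + (α * M) ^ 2) :=
        Finset.sum_le_sum fun i _ => mul_le_mul_of_nonneg_left (hexp i) (hq i)
    _ = (∑ i, q i) * (1 + (α * M) ^ 2) + α * ∑ i, q i * t i := by
        rw [Finset.sum_mul, Finset.mul_sum, ← Finset.sum_add_distrib]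
        exact Finset.sum_congr rfl fun i _ => by ring
    _ ≤ 1 - α * b + (α * M) ^ 2 := by
        rw [hqsum]
        linarith [mul_le_mul_of_nonneg_left hmean hα]

theorem rpow_le_exp_mul_max_log {x α : ℝ} (hx : 0 ≤ x) (hα : 0 < α) (m : ℝ) :
    x ^ α ≤ Real.exp (α * max (Real.log x) m) := by
  rcases hx.eq_or_lt with rfl | hpos
  · rw [Real.zero_rpow hα.ne']
    exact (Real.exp_pos _).le
  · rw [Real.rpow_def_of_pos hpos, mul_comm]
    gcongr
    exact le_max_left _ _

-- Logarithms are truncated below at `-M`, which the lower bound `δ` on the weights allows without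
-- spoiling the mean; then `exp (α t) = 1 + α t + O(α²)` uniformly.
theorem exists_sum_mul_rpow_le_of_sum_mul_log_le {δ b : ℝ} (hδ : 0 < δ) (hb : 0 < b) (L : ℝ) :
    ∃ α > (0 : ℝ), ∃ r < (1 : ℝ≥0), ∀ q ρ : ι → ℝ, (∀ i, δ ≤ q i) → ∑ i, q i = 1 →
      (∀ i, ρ i ∈ Set.Icc 0 L) → ∑ i, q i * Real.log (ρ i) ≤ -b → ∑ i, q i * ρ i ^ α ≤ r := by
  set l := Real.posLog L
  have hl : 0 ≤ l := Real.posLog_nonneg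
  set M := (l + b) * (1 + δ⁻¹)
  have hδM : l + b ≤ δ * M := by
    have : δ * M = (l + b) * δ + (l + b) := by simp only [M]; field_simp
    nlinarith
  have hlM : l + b ≤ M := le_mul_of_one_le_right (by positivity) (by simp [hδ.le])
  have hM : 0 < M := by linarith
  set α := b / (2 * M ^ 2)
  have hαM : α * M ≤ 1 := by
    have : α * M = b / (2 * M) := by simp only [α]; field_simp
    rw [this, div_le_one (by positivity)]
    linarith
  have hαM2 : (α * M) ^ 2 = α * b / 2 := by simp only [α]; field_simp
  have hα : 0 < α := by positivity
  refine ⟨α, hα, (1 - α * b / 2).toNNReal, ?_, fun q ρ hq hqsum hρ hmean =>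
    le_trans ?_ (Real.le_coe_toNNReal _)⟩
  · rw [Real.toNNReal_lt_one]
    linarith [mul_pos hα hb]
  have hlog : ∀ i, Real.log (ρ i) ≤ l := fun i =>
    (le_max_right 0 _).trans (Real.posLog_le_posLog (hρ i).1 (hρ i).2)
  have hq0 : ∀ i, 0 ≤ q i := fun i => hδ.le.trans (hq i)
  calc ∑ i, q i * ρ i ^ α ≤ ∑ i, q i * Real.exp (α * max (Real.log (ρ i)) (-M)) :=
        Finset.sum_le_sum fun i _ => mul_le_mul_of_nonneg_left
          (rpow_le_exp_mul_max_log (hρ i).1 hα (-M)) (hq0 i)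
    _ ≤ 1 - α * b + (α * M) ^ 2 :=
        sum_mul_exp_le_of_abs_le hq0 hqsum
          (fun i => abs_le.2 ⟨le_max_right _ _, max_le (by linarith [hlog i]) (by linarith)⟩)
          (sum_mul_max_neg_le_neg hδ.le hq hqsum hl hlog hM.le hδM hmean) hα.le hαM
    _ = 1 - α * b / 2 := by rw [hαM2]; ring

end FractionalMoment

section Prepend

variable {α : Type*}

/-- The sequence `a, ω 0, ω 1, …`: the inverse branch of the one-sided shift labelled by `a`. -/
def prepend (a : α) (ω : ℕ → α) : ℕ → α
  | 0 => a
  | n + 1 => ω n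

theorem measurable_prepend [MeasurableSpace α] (a : α) : Measurable (prepend a) :=
  measurable_pi_lambda _ fun n => match n with
    | 0 => measurable_const
    | n + 1 => measurable_pi_apply n

theorem leftShift_prepend (a : α) (ω : ℕ → α) : leftShift (prepend a ω) = ω :=
  rfl

theorem preimage_prepend_cylinder_succ (ω : ℕ → α) (n : ℕ) :
    prepend (ω 0) ⁻¹' PiNat.cylinder ω (n + 1) = PiNat.cylinder (leftShift ω) n := by
  ext τ
  exact Nat.forall_lt_succ_left'.trans (and_iff_right rfl)

theorem preimage_prepend_cylinder_succ_of_ne {a : α} {ω : ℕ → α} (ha : a ≠ ω 0) (n : ℕ) :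
    prepend a ⁻¹' PiNat.cylinder ω (n + 1) = ∅ :=
  Set.eq_empty_of_forall_notMem fun _ hτ => ha (hτ 0 n.succ_pos)

end Prepend

section Iterates

variable {X : Type*} (h : Fin k → X → X) (p : Fin k → X → ℝ)

theorem hIter_succ (ω : ℕ → Fin k) (n : ℕ) (x : X) :
    hIter h ω (n + 1) x = h (ω n) (hIter h ω n x) :=
  rfl

theorem hIter_succ' (ω : ℕ → Fin k) (n : ℕ) (x : X) :
    hIter h ω (n + 1) x = hIter h (leftShift ω) n (h (ω 0) x) := by
  induction n with
  | zero => rfl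
  | succ n ih => rw [hIter_succ, ih, hIter_succ, leftShift]

theorem hIter_eq_of_mem_cylinder {ω τ : ℕ → Fin k} {n : ℕ} (hτ : τ ∈ PiNat.cylinder ω n) (x : X) :
    hIter h τ n x = hIter h ω n x := by
  induction n with
  | zero => rfl
  | succ n ih =>
    rw [hIter_succ, hIter_succ, ih (PiNat.cylinder_anti ω n.le_succ hτ), hτ n n.lt_succ_self]

theorem measurable_hIter_pair {Y : Type*} [MeasurableSpace Y] (g : X → X → Y) (n : ℕ) (x y : X) :
    Measurable fun ω : ℕ → Fin k => g (hIter h ω n x) (hIter h ω n y) :=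
  measurable_of_forall_cylinder n fun ω τ hτ => by simp only [hIter_eq_of_mem_cylinder h hτ]

theorem pIter_eq_prod (ω : ℕ → Fin k) (n : ℕ) (x : X) :
    pIter h p ω n x = ∏ i ∈ Finset.range n, p (ω i) (hIter h ω i x) := by
  induction n with
  | zero => rfl
  | succ n ih =>
    rw [Finset.prod_range_succ, ← ih]
    rfl

theorem pIter_succ' (ω : ℕ → Fin k) (n : ℕ) (x : X) :
    pIter h p ω (n + 1) x = p (ω 0) x * pIter h p (leftShift ω) n (h (ω 0) x) := by
  simp only [pIter_eq_prod, Finset.prod_range_succ', hIter_succ', mul_comm (p (ω 0) x)]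
  rfl

variable [MeasurableSpace X] {h p}

theorem measurable_hIter (hh : ∀ i, Measurable (h i)) (ω : ℕ → Fin k) (n : ℕ) :
    Measurable (hIter h ω n) := by
  induction n with
  | zero => exact measurable_id
  | succ n ih => exact (hh (ω n)).comp ih

theorem measurable_pIter (hh : ∀ i, Measurable (h i)) (hp : ∀ i, Measurable (p i))
    (ω : ℕ → Fin k) (n : ℕ) : Measurable (pIter h p ω n) := by
  simp only [funext (pIter_eq_prod h p ω n)]
  exact Finset.measurable_prod _ fun i _ => (hp (ω i)).comp (measurable_hIter hh ω i)

end Iterates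

/-- `P x` is the law `p_x` of the symbol sequence driving the random orbit of `x`: at each step the
current point `y` moves to `h i y` with probability `p i y`. -/
structure IsPathLaw {X : Type*} (h : Fin k → X → X) (p : Fin k → X → ℝ)
    (P : X → Measure (ℕ → Fin k)) : Prop where
  isProbabilityMeasure : ∀ x, IsProbabilityMeasure (P x)
  apply_cylinder : ∀ x ω n, P x (PiNat.cylinder ω n) = ENNReal.ofReal (pIter h p ω n x)

namespace IsPathLaw

variable {X : Type*} {h : Fin k → X → X} {p : Fin k → X → ℝ} {P : X → Measure (ℕ → Fin k)}

theorem measurable [MeasurableSpace X] (hP : IsPathLaw h p P) (hh : ∀ i, Measurable (h i))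
    (hp : ∀ i, Measurable (p i)) : Measurable P := by
  have := hP.isProbabilityMeasure
  refine Measurable.measure_of_isPiSystem_of_isProbabilityMeasure
    measurableSpace_pi_eq_generateFrom_cylinder isPiSystem_cylinder ?_
  rintro _ ⟨ω, n, rfl⟩
  simp_rw [hP.apply_cylinder]
  exact (measurable_pIter hh hp ω n).ennreal_ofReal

theorem eq_sum_smul_map_prepend (hP : IsPathLaw h p P) (hp : ∀ i x, 0 ≤ p i x)
    (hpsum : ∀ x, ∑ i, p i x = 1) (x : X) :
    P x = ∑ i, ENNReal.ofReal (p i x) • (P (h i x)).map (prepend i) := by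
  have := hP.isProbabilityMeasure
  refine measure_ext_of_cylinder fun ω n => ?_
  simp only [Measure.coe_finsetSum, Finset.sum_apply, Measure.smul_apply, smul_eq_mul,
    Measure.map_apply (measurable_prepend _) (measurableSet_cylinder ω n)]
  cases n with
  | zero =>
    simp only [PiNat.cylinder_zero, Set.preimage_univ, measure_univ, mul_one]
    rw [← ENNReal.ofReal_sum_of_nonneg fun i _ => hp i x, hpsum, ENNReal.ofReal_one]
  | succ n =>
    rw [Finset.sum_eq_single (ω 0)
        (fun i _ hi => by simp [preimage_prepend_cylinder_succ_of_ne hi]) (by simp),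
      preimage_prepend_cylinder_succ, hP.apply_cylinder, pIter_succ',
      ENNReal.ofReal_mul (hp _ _), hP.apply_cylinder]

theorem apply_eq_sum (hP : IsPathLaw h p P) (hp : ∀ i x, 0 ≤ p i x)
    (hpsum : ∀ x, ∑ i, p i x = 1) (x : X) {A : Set (ℕ → Fin k)} (hA : MeasurableSet A) :
    P x A = ∑ i, ENNReal.ofReal (p i x) * P (h i x) (prepend i ⁻¹' A) := by
  conv_lhs => rw [hP.eq_sum_smul_map_prepend hp hpsum x]
  simp only [Measure.coe_finsetSum, Finset.sum_apply, Measure.smul_apply, smul_eq_mul,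
    Measure.map_apply (measurable_prepend _) hA]

theorem lintegral_eq_sum (hP : IsPathLaw h p P) (hp : ∀ i x, 0 ≤ p i x)
    (hpsum : ∀ x, ∑ i, p i x = 1) (x : X) {F : (ℕ → Fin k) → ℝ≥0∞} (hF : Measurable F) :
    ∫⁻ ω, F ω ∂P x = ∑ i, ENNReal.ofReal (p i x) * ∫⁻ ω, F (prepend i ω) ∂P (h i x) := by
  conv_lhs => rw [hP.eq_sum_smul_map_prepend hp hpsum x]
  simp only [lintegral_finsetSum_measure, lintegral_smul_measure, smul_eq_mul,
    lintegral_map hF (measurable_prepend _)]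

theorem apply_cylinder_inter_preimage_iterate_leftShift (hP : IsPathLaw h p P)
    (hp : ∀ i x, 0 ≤ p i x) (hpsum : ∀ x, ∑ i, p i x = 1) {A : Set (ℕ → Fin k)}
    (hA : MeasurableSet A) (ω : ℕ → Fin k) (n : ℕ) (x : X) :
    P x (PiNat.cylinder ω n ∩ leftShift^[n] ⁻¹' A) =
      ENNReal.ofReal (pIter h p ω n x) * P (hIter h ω n x) A := by
  induction n generalizing ω x with
  | zero => simp [pIter, hIter]
  | succ n ih =>
    have hzero : ∀ i ≠ ω 0,
        P (h i x) (prepend i ⁻¹' (PiNat.cylinder ω (n + 1) ∩ leftShift^[n + 1] ⁻¹' A)) = 0 :=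
      fun i hi => by
        rw [Set.preimage_inter, preimage_prepend_cylinder_succ_of_ne hi, Set.empty_inter,
          measure_empty]
    have hself : prepend (ω 0) ⁻¹' (PiNat.cylinder ω (n + 1) ∩ leftShift^[n + 1] ⁻¹' A) =
        PiNat.cylinder (leftShift ω) n ∩ leftShift^[n] ⁻¹' A := by
      rw [Set.preimage_inter, preimage_prepend_cylinder_succ]
      rfl
    rw [hP.apply_eq_sum hp hpsum x ((measurableSet_cylinder ω (n + 1)).inter
        (measurable_leftShift.iterate (n + 1) hA)),
      Finset.sum_eq_single (ω 0) (fun i _ hi => by rw [hzero i hi, mul_zero]) (by simp), hself,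
      ih, pIter_succ', hIter_succ', ENNReal.ofReal_mul (hp _ _), mul_assoc]

theorem lintegral_hIter_le_pow_mul (hP : IsPathLaw h p P) (hp : ∀ i x, 0 ≤ p i x)
    (hpsum : ∀ x, ∑ i, p i x = 1) {g : X → X → ℝ≥0∞} {r : ℝ≥0∞}
    (hg : ∀ x y, ∑ i, ENNReal.ofReal (p i x) * g (h i x) (h i y) ≤ r * g x y) (n : ℕ) (x y : X) :
    ∫⁻ ω, g (hIter h ω n x) (hIter h ω n y) ∂P x ≤ r ^ n * g x y := by
  have := hP.isProbabilityMeasure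
  induction n generalizing x y with
  | zero => simp [hIter]
  | succ n ih =>
    rw [hP.lintegral_eq_sum hp hpsum x (measurable_hIter_pair h g (n + 1) x y)]
    simp_rw [hIter_succ', leftShift_prepend]
    calc ∑ i, ENNReal.ofReal (p i x) *
          ∫⁻ ω, g (hIter h ω n (h i x)) (hIter h ω n (h i y)) ∂P (h i x)
        ≤ ∑ i, ENNReal.ofReal (p i x) * (r ^ n * g (h i x) (h i y)) := by
          gcongr with i
          exact ih _ _
      _ = r ^ n * ∑ i, ENNReal.ofReal (p i x) * g (h i x) (h i y) := by
          simp_rw [Finset.mul_sum, mul_left_comm]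
      _ ≤ r ^ (n + 1) * g x y := by
          rw [pow_succ, mul_assoc]
          gcongr
          exact hg x y

end IsPathLaw

section ContractingOnAverage

variable {X : Type*} [MetricSpace X] {h : Fin k → X → X} {p : Fin k → X → ℝ}

theorem exists_sum_mul_dist_rpow_le (hlip : ∀ i, ∃ L : ℝ≥0, LipschitzWith L (h i))
    (hpbelow : ∃ δ > (0 : ℝ), ∀ i x, δ ≤ p i x) (hpsum : ∀ x, ∑ i, p i x = 1)
    (hcoa : ∃ b > (0 : ℝ), ∀ x y, x ≠ y →
      ∑ j, p j x * Real.log (dist (h j x) (h j y) / dist x y) < -b) :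
    ∃ α > (0 : ℝ), ∃ r < (1 : ℝ≥0), ∀ x y,
      ∑ i, p i x * dist (h i x) (h i y) ^ α ≤ r * dist x y ^ α := by
  choose L hL using hlip
  obtain ⟨δ, hδ, hpδ⟩ := hpbelow
  obtain ⟨b, hb, hcoa⟩ := hcoa
  obtain ⟨α, hα, r, hr, hmoment⟩ :=
    exists_sum_mul_rpow_le_of_sum_mul_log_le (ι := Fin k) hδ hb (∑ i, L i : ℝ≥0)
  refine ⟨α, hα, r, hr, fun x y => ?_⟩
  rcases eq_or_ne x y with rfl | hxy
  · simp [Real.zero_rpow hα.ne']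
  have hdist : 0 < dist x y := dist_pos.2 hxy
  have hratio : ∀ i, dist (h i x) (h i y) / dist x y ∈ Set.Icc (0 : ℝ) (∑ i, L i : ℝ≥0) :=
    fun i => by
      refine ⟨by positivity, (div_le_iff₀ hdist).2 (((hL i).dist_le_mul x y).trans ?_)⟩
      gcongr
      exact Finset.single_le_sum (fun _ _ => zero_le) (Finset.mem_univ i)
  calc ∑ i, p i x * dist (h i x) (h i y) ^ α
      = (∑ i, p i x * (dist (h i x) (h i y) / dist x y) ^ α) * dist x y ^ α := by
        simp_rw [Finset.sum_mul, mul_assoc, ← Real.mul_rpow (hratio _).1 hdist.le,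
          div_mul_cancel₀ _ hdist.ne']
    _ ≤ r * dist x y ^ α := by
        gcongr
        exact hmoment _ _ (hpδ · x) (hpsum x) hratio (hcoa x y hxy).le

end ContractingOnAverage

namespace IsPathLaw

variable {X : Type*} [PseudoMetricSpace X] {h : Fin k → X → X} {p : Fin k → X → ℝ}
  {P : X → Measure (ℕ → Fin k)}

theorem ae_exists_dist_hIter_le_mul_pow (hP : IsPathLaw h p P) (hp : ∀ i x, 0 ≤ p i x)
    (hpsum : ∀ x, ∑ i, p i x = 1) {α : ℝ} (hα : 0 < α) {r : ℝ≥0} (hr : r < 1)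
    (hmoment : ∀ x y, ∑ i, p i x * dist (h i x) (h i y) ^ α ≤ r * dist x y ^ α) (x y : X) :
    ∀ᵐ ω ∂P x, ∃ C : ℝ, ∃ s ∈ Set.Ico (0 : ℝ) 1,
      ∀ n, dist (hIter h ω n x) (hIter h ω n y) ≤ C * s ^ n := by
  obtain ⟨q, hrq, hq⟩ := exists_between hr
  have hcontract : ∀ x y, ∑ i, ENNReal.ofReal (p i x) * ENNReal.ofReal (dist (h i x) (h i y) ^ α) ≤
      r * ENNReal.ofReal (dist x y ^ α) := fun x y => by
    rw [← ENNReal.ofReal_coe_nnreal, ← ENNReal.ofReal_mul r.coe_nonneg]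
    simp_rw [← ENNReal.ofReal_mul (hp _ _)]
    rw [← ENNReal.ofReal_sum_of_nonneg fun i _ => mul_nonneg (hp i x) (by positivity)]
    exact ENNReal.ofReal_le_ofReal (hmoment x y)
  filter_upwards [ae_exists_forall_le_mul_pow
    (fun n => measurable_hIter_pair h (fun a b => ENNReal.ofReal (dist a b ^ α)) n x y)
    ENNReal.ofReal_ne_top hrq fun n => (hP.lintegral_hIter_le_pow_mul hp hpsum
      (g := fun a b => ENNReal.ofReal (dist a b ^ α)) hcontract n x y).trans_eq (mul_comm _ _)]
    with ω ⟨C, hC⟩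
  refine ⟨(C : ℝ) ^ α⁻¹, (q : ℝ) ^ α⁻¹, ⟨by positivity,
    Real.rpow_lt_one q.coe_nonneg hq (inv_pos.2 hα)⟩, fun n => ?_⟩
  have hdist : dist (hIter h ω n x) (hIter h ω n y) ^ α ≤ C * q ^ n := by
    have := hC n
    rwa [← ENNReal.coe_pow, ← ENNReal.coe_mul, ENNReal.ofReal_le_coe, NNReal.coe_mul,
      NNReal.coe_pow] at this
  calc dist (hIter h ω n x) (hIter h ω n y) ≤ (C * q ^ n : ℝ) ^ α⁻¹ :=
        (Real.le_rpow_inv_iff_of_pos dist_nonneg (by positivity) hα).2 hdist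
    _ = (C : ℝ) ^ α⁻¹ * ((q : ℝ) ^ α⁻¹) ^ n := by
        rw [Real.mul_rpow C.coe_nonneg (by positivity), Real.rpow_pow_comm q.coe_nonneg]

theorem absolutelyContinuous (hP : IsPathLaw h p P) (hpbelow : ∃ δ > (0 : ℝ), ∀ i x, δ ≤ p i x)
    (hdini : ∀ i, IsDini (p i)) {x y : X}
    (hdecay : ∀ᵐ ω ∂P x, ∃ C : ℝ, ∃ s ∈ Set.Ico (0 : ℝ) 1,
      ∀ n, dist (hIter h ω n x) (hIter h ω n y) ≤ C * s ^ n) : P x ≪ P y := by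
  have := hP.isProbabilityMeasure
  obtain ⟨δ, hδ, hpδ⟩ := hpbelow
  have hp : ∀ i x, 0 ≤ p i x := fun i x => hδ.le.trans (hpδ i x)
  refine absolutelyContinuous_of_ae_cylinder_le ?_
  filter_upwards [hdecay] with ω ⟨C, s, ⟨hs0, hs1⟩, hdist⟩
  obtain ⟨K, hK⟩ := exists_forall_prod_range_le_mul_prod_range
    (a := fun n => p (ω n) (hIter h ω n x)) (b := fun n => p (ω n) (hIter h ω n y))
    (ε := fun n => ∑ i, |p i (hIter h ω n x) - p i (hIter h ω n y)|)
    hδ (fun _ => hp _ _) (fun _ => hpδ _ _)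
    (fun n => sub_le_iff_le_add'.1 ((le_abs_self _).trans
      (Finset.single_le_sum (f := fun i => |p i (hIter h ω n x) - p i (hIter h ω n y)|)
        (fun _ _ => abs_nonneg _) (Finset.mem_univ (ω n)))))
    (fun _ => Finset.sum_nonneg fun _ _ => abs_nonneg _)
    (summable_sum fun i _ => (hdini i).summable_abs_sub hs0 hs1 hdist)
  refine ⟨K.toNNReal, fun n => ?_⟩
  rw [hP.apply_cylinder, hP.apply_cylinder, pIter_eq_prod, pIter_eq_prod, ← ENNReal.ofReal,
    ← ENNReal.ofReal_mul' (Finset.prod_nonneg fun _ _ => hp _ _)]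
  exact ENNReal.ofReal_le_ofReal (hK n)

end IsPathLaw

theorem sum_mul_sq_eq_sum_mul_sq_sub_add_sq {ι : Type*} [Fintype ι] {w a : ι → ℝ}
    (hw : ∑ i, w i = 1) {m : ℝ} (hm : m = ∑ i, w i * a i) :
    ∑ i, w i * a i ^ 2 = ∑ i, w i * (a i - m) ^ 2 + m ^ 2 := by
  have hexpand : ∑ i, w i * (a i - m) ^ 2 =
      ∑ i, w i * a i ^ 2 - 2 * m * ∑ i, w i * a i + m ^ 2 * ∑ i, w i := by
    rw [Finset.mul_sum, Finset.mul_sum, ← Finset.sum_sub_distrib, ← Finset.sum_add_distrib]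
    exact Finset.sum_congr rfl fun i _ => by ring
  rw [hexpand, hw, ← hm]
  ring

/-- `ν` is an invariant measure of the iterated function system with place-dependent
probabilities `(h, p)`: one random step leaves the law `ν` of the current point unchanged. -/
def IsStationaryMeasure {X : Type*} [MeasurableSpace X] (h : Fin k → X → X) (p : Fin k → X → ℝ)
    (ν : Measure X) : Prop :=
  ν = ∑ i, Measure.map (h i) (ν.withDensity fun x => ENNReal.ofReal (p i x))

namespace IsStationaryMeasure

variable {X : Type*} [MeasurableSpace X] {h : Fin k → X → X} {p : Fin k → X → ℝ} {ν : Measure X}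

theorem lintegral_eq (hν : IsStationaryMeasure h p ν) (hh : ∀ i, Measurable (h i))
    (hp : ∀ i, Measurable (p i)) {g : X → ℝ≥0∞} (hg : Measurable g) :
    ∫⁻ x, g x ∂ν = ∫⁻ x, ∑ i, ENNReal.ofReal (p i x) * g (h i x) ∂ν := by
  conv_lhs => rw [show ν = _ from hν]
  have hmeas : ∀ i, Measurable fun x => ENNReal.ofReal (p i x) * g (h i x) := fun i =>
    (hp i).ennreal_ofReal.mul (hg.comp (hh i))
  rw [lintegral_finsetSum_measure, lintegral_finsetSum _ fun i _ => hmeas i]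
  refine Finset.sum_congr rfl fun i _ => ?_
  rw [lintegral_map hg (hh i)]
  exact lintegral_withDensity_eq_lintegral_mul ν (hp i).ennreal_ofReal (hg.comp (hh i))

theorem ae_forall_comp (hν : IsStationaryMeasure h p ν) (hh : ∀ i, Measurable (h i))
    (hp : ∀ i, Measurable (p i)) (hp0 : ∀ i x, 0 < p i x) {Q : X → Prop} (hQ : ∀ᵐ x ∂ν, Q x) :
    ∀ᵐ x ∂ν, ∀ i, Q (h i x) := by
  refine ae_all_iff.2 fun i => ?_
  have hle : (ν.withDensity fun x => ENNReal.ofReal (p i x)).map (h i) ≤ ν := by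
    conv_rhs => rw [show ν = _ from hν]
    exact Finset.single_le_sum
      (f := fun i => (ν.withDensity fun x => ENNReal.ofReal (p i x)).map (h i))
      (fun _ _ => Measure.zero_le _) (Finset.mem_univ i)
  have hpush := ae_of_ae_map (hh i).aemeasurable
    ((Measure.absolutelyContinuous_of_le hle).ae_le hQ)
  filter_upwards [(ae_withDensity_iff (hp i).ennreal_ofReal).1 hpush] with x hx
  exact hx (ENNReal.ofReal_pos.2 (hp0 i x)).ne'

-- Stationarity makes the total mean-square increment of `f` along one step equal to
-- `∫ f² - ∫ f² = 0`.
theorem ae_forall_comp_eq_of_harmonic (hν : IsStationaryMeasure h p ν) (hh : ∀ i, Measurable (h i))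
    (hp : ∀ i, Measurable (p i)) (hp0 : ∀ i x, 0 < p i x) (hpsum : ∀ x, ∑ i, p i x = 1)
    {f : X → ℝ} (hf : Measurable f) (hfL2 : MemLp f 2 ν)
    (hharm : ∀ x, f x = ∑ i, p i x * f (h i x)) : ∀ᵐ x ∂ν, ∀ i, f (h i x) = f x := by
  let V (x : X) : ℝ := ∑ i, p i x * (f (h i x) - f x) ^ 2
  have hterm : ∀ x i, 0 ≤ p i x * (f (h i x) - f x) ^ 2 := fun x i =>
    mul_nonneg (hp0 i x).le (sq_nonneg _)
  have hV : ∀ x, 0 ≤ V x := fun x => Finset.sum_nonneg fun i _ => hterm x i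
  have hVmeas : Measurable fun x => ENNReal.ofReal (V x) :=
    (Finset.measurable_fun_sum _ fun i _ =>
      (hp i).mul (((hf.comp (hh i)).sub hf).pow_const 2)).ennreal_ofReal
  have hvariance : ∀ x, ∑ i, ENNReal.ofReal (p i x) * ENNReal.ofReal (f (h i x) ^ 2) =
      ENNReal.ofReal (V x) + ENNReal.ofReal (f x ^ 2) := fun x => by
    simp_rw [← ENNReal.ofReal_mul (hp0 _ x).le]
    rw [← ENNReal.ofReal_sum_of_nonneg fun i _ => mul_nonneg (hp0 i x).le (sq_nonneg _),
      ← ENNReal.ofReal_add (hV x) (sq_nonneg _),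
      sum_mul_sq_eq_sum_mul_sq_sub_add_sq (hpsum x) (hharm x)]
  have henergy : ∫⁻ x, ENNReal.ofReal (f x ^ 2) ∂ν =
      ∫⁻ x, ENNReal.ofReal (V x) ∂ν + ∫⁻ x, ENNReal.ofReal (f x ^ 2) ∂ν := by
    rw [← lintegral_add_left hVmeas, ← lintegral_congr hvariance]
    exact hν.lintegral_eq hh hp (hf.pow_const 2).ennreal_ofReal
  have hVzero : ∫⁻ x, ENNReal.ofReal (V x) ∂ν = 0 :=
    (ENNReal.add_left_inj hfL2.integrable_sq.lintegral_lt_top.ne).1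
      (henergy.symm.trans (zero_add _).symm)
  filter_upwards [(lintegral_eq_zero_iff hVmeas).1 hVzero] with x hx i
  have hVx : V x = 0 := (ENNReal.ofReal_eq_zero.1 hx).antisymm (hV x)
  have hi := (Finset.sum_eq_zero_iff_of_nonneg fun i _ => hterm x i).1 hVx i (Finset.mem_univ i)
  exact sub_eq_zero.1 (eq_zero_of_pow_eq_zero ((mul_eq_zero.1 hi).resolve_left (hp0 i x).ne'))

theorem ae_forall_hIter_eq (hν : IsStationaryMeasure h p ν) (hh : ∀ i, Measurable (h i))
    (hp : ∀ i, Measurable (p i)) (hp0 : ∀ i x, 0 < p i x) {Y : Type*} {f : X → Y}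
    (hf : ∀ᵐ x ∂ν, ∀ i, f (h i x) = f x) : ∀ᵐ x ∂ν, ∀ n ω, f (hIter h ω n x) = f x := by
  refine ae_all_iff.2 fun n => ?_
  induction n with
  | zero => exact .of_forall fun _ _ => rfl
  | succ n ih =>
    filter_upwards [hf, hν.ae_forall_comp hh hp hp0 ih] with x hstep horbit ω
    rw [hIter_succ', horbit, hstep]

end IsStationaryMeasure

namespace IsPathLaw

variable {X : Type*} {h : Fin k → X → X} {p : Fin k → X → ℝ} {P : X → Measure (ℕ → Fin k)}
  {A : Set (ℕ → Fin k)}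

theorem measureReal_eq_sum_of_preimage_leftShift_eq (hP : IsPathLaw h p P)
    (hp : ∀ i x, 0 ≤ p i x) (hpsum : ∀ x, ∑ i, p i x = 1) (hA : MeasurableSet A)
    (hAinv : leftShift ⁻¹' A = A) (x : X) :
    (P x).real A = ∑ i, p i x * (P (h i x)).real A := by
  have := hP.isProbabilityMeasure
  have hprepend : ∀ i, prepend i ⁻¹' A = A := fun i => by
    conv_lhs => rw [← hAinv]
    rfl
  rw [measureReal_def, hP.apply_eq_sum hp hpsum x hA, ENNReal.toReal_sum
    fun i _ => ENNReal.mul_ne_top ENNReal.ofReal_ne_top (measure_ne_top _ _)]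
  simp_rw [ENNReal.toReal_mul, ENNReal.toReal_ofReal (hp _ x), hprepend, measureReal_def]

theorem restrict_eq_smul_of_forall_hIter_eq (hP : IsPathLaw h p P) (hp : ∀ i x, 0 ≤ p i x)
    (hpsum : ∀ x, ∑ i, p i x = 1) (hA : MeasurableSet A) (hAinv : leftShift ⁻¹' A = A) {x : X}
    (hx : ∀ n ω, P (hIter h ω n x) A = P x A) : (P x).restrict A = P x A • P x := by
  have := hP.isProbabilityMeasure
  refine measure_ext_of_cylinder fun ω n => ?_
  have hiter : leftShift^[n] ⁻¹' A = A := by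
    rw [Set.preimage_iterate_eq]
    exact Function.iterate_fixed hAinv n
  have hmarkov := hP.apply_cylinder_inter_preimage_iterate_leftShift hp hpsum hA ω n x
  rw [hiter, hx, ← hP.apply_cylinder] at hmarkov
  rw [Measure.restrict_apply (measurableSet_cylinder ω n), hmarkov, Measure.smul_apply,
    smul_eq_mul, mul_comm]

theorem ae_measure_eq_zero_or_compl [MeasurableSpace X] {ν : Measure X} [IsFiniteMeasure ν]
    (hP : IsPathLaw h p P) (hν : IsStationaryMeasure h p ν) (hh : ∀ i, Measurable (h i))
    (hp : ∀ i, Measurable (p i)) (hp0 : ∀ i x, 0 < p i x) (hpsum : ∀ x, ∑ i, p i x = 1)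
    (hA : MeasurableSet A) (hAinv : leftShift ⁻¹' A = A) :
    ∀ᵐ x ∂ν, P x A = 0 ∨ P x Aᶜ = 0 := by
  have := hP.isProbabilityMeasure
  have hp0' : ∀ i x, 0 ≤ p i x := fun i x => (hp0 i x).le
  have hf : Measurable fun x => (P x).real A :=
    ((Measure.measurable_coe hA).comp (hP.measurable hh hp)).ennreal_toReal
  have hfL2 : MemLp (fun x => (P x).real A) 2 ν :=
    .of_bound hf.aestronglyMeasurable 1 (.of_forall fun x => by
      rw [Real.norm_of_nonneg measureReal_nonneg]
      exact measureReal_le_one)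
  have hharm := hP.measureReal_eq_sum_of_preimage_leftShift_eq hp0' hpsum hA hAinv
  filter_upwards [hν.ae_forall_hIter_eq hh hp hp0
    (hν.ae_forall_comp_eq_of_harmonic hh hp hp0 hpsum hf hfL2 hharm)] with x hx
  refine measure_eq_zero_or_compl_of_restrict_eq_smul hA
    (hP.restrict_eq_smul_of_forall_hIter_eq hp0' hpsum hA hAinv fun n ω => ?_)
  exact (measureReal_eq_measureReal_iff).1 (hx n ω)

theorem preErgodic_leftShift [MeasurableSpace X] {ν : Measure X} [IsFiniteMeasure ν]
    (hP : IsPathLaw h p P) (hν : IsStationaryMeasure h p ν) (hh : ∀ i, Measurable (h i))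
    (hp : ∀ i, Measurable (p i)) (hp0 : ∀ i x, 0 < p i x) (hpsum : ∀ x, ∑ i, p i x = 1)
    (hac : ∀ x y, P x ≪ P y) {m : Measure (ℕ → Fin k)}
    (hm : ∀ A, MeasurableSet A → m A = ∫⁻ x, P x A ∂ν) : PreErgodic leftShift m := by
  refine ⟨fun A hA hAinv => eventuallyConst_ae_of_measure_eq_zero_or_compl ?_⟩
  have hzeroOne := hP.ae_measure_eq_zero_or_compl hν hh hp hp0 hpsum hA hAinv
  by_cases hnull : ∃ x, P x Aᶜ = 0
  · obtain ⟨x, hx⟩ := hnull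
    right
    rw [hm _ hA.compl, lintegral_congr fun y => hac y x hx, lintegral_zero]
  · left
    rw [hm A hA, lintegral_congr_ae (hzeroOne.mono fun y hy =>
      hy.resolve_right fun hy' => hnull ⟨y, hy'⟩), lintegral_zero]

end IsPathLaw

theorem natural_extension_ergodic_general
    {X : Type*} [MetricSpace X] [MeasurableSpace X] [BorelSpace X]
    {h : Fin k → X → X} {p : Fin k → X → ℝ}
    (hlip : ∀ i, ∃ L : ℝ≥0, LipschitzWith L (h i))
    (hpbelow : ∃ δ > (0 : ℝ), ∀ i x, δ ≤ p i x)
    (hpsum : ∀ x, ∑ i, p i x = 1)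
    (hdini : ∀ i, IsDini (p i))
    (hcoa : ∃ b > (0 : ℝ), ∀ x y, x ≠ y →
      ∑ j, p j x * Real.log (dist (h j x) (h j y) / dist x y) < -b)
    {ν : Measure X} [IsFiniteMeasure ν] (hν : IsStationaryMeasure h p ν)
    {P : X → Measure (ℕ → Fin k)} (hP : IsPathLaw h p P)
    {μ : Measure (ℤ → Fin k)} [IsFiniteMeasure μ] (hμ : MeasurePreserving leftShift μ μ)
    (hmarginal : ∀ A, MeasurableSet A → μ.map nonnegPart A = ∫⁻ x, P x A ∂ν) :
    Ergodic leftShift μ := by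
  have hp0 : ∀ i x, 0 < p i x := fun i x =>
    let ⟨_, hδ, hpδ⟩ := hpbelow
    hδ.trans_le (hpδ i x)
  have hh : ∀ i, Measurable (h i) := fun i => (hlip i).choose_spec.continuous.measurable
  have hp : ∀ i, Measurable (p i) := fun i => (hdini i).continuous.measurable
  obtain ⟨α, hα, r, hr, hmoment⟩ := exists_sum_mul_dist_rpow_le hlip hpbelow hpsum hcoa
  have hac : ∀ x y, P x ≪ P y := fun x y => hP.absolutelyContinuous hpbelow hdini
    (hP.ae_exists_dist_hIter_le_mul_pow (fun i x => (hp0 i x).le) hpsum hα hr hmoment x y)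
  exact ergodic_leftShift_of_preErgodic_map_nonnegPart hμ
    (hP.preErgodic_leftShift hν hh hp hp0 hpsum hac hmarginal)

/-- The natural extension of the one-sided system, i.e. the two-sided shift on
`{1,…,k}^ℤ` with the measure whose marginal on nonnegative coordinates is `μ₊`,
is ergodic. -/
theorem natural_extension_ergodic
    (X : Type*) [MetricSpace X] [CompleteSpace X] [TopologicalSpace.SeparableSpace X]
    [MeasurableSpace X] [BorelSpace X] (x₀ : X)
    (hk : 2 ≤ k) (h : Fin k → X → X) (p : Fin k → X → ℝ)
    (hlip : ∀ i, ∃ L : ℝ≥0, LipschitzWith L (h i))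
    (hprange : ∀ i x, p i x ∈ Set.Ioo (0 : ℝ) 1)
    (hpbelow : ∃ δ > (0 : ℝ), ∀ i x, δ ≤ p i x)
    (hpsum : ∀ x, ∑ i, p i x = 1)
    (hdini : ∀ i, ∃ w : ℝ → ℝ, Monotone w ∧
      (∀ x y : X, |p i x - p i y| ≤ w (dist x y)) ∧
      Summable fun n : ℕ => w ((1 / 2 : ℝ) ^ (n + 1)))
    (hcoa : ∃ b > (0 : ℝ), ∀ x y, x ≠ y →
      ∑ j, p j x * Real.log (dist (h j x) (h j y) / dist x y) < -b)
    -- the (unique) invariant probability measure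
    (ν : Measure X) [IsProbabilityMeasure ν]
    (hinv : ν = ∑ i, Measure.map (h i)
      (ν.withDensity fun x => ENNReal.ofReal (p i x)))
    -- the family of measures `p_x` on the one-sided symbol space
    (P : X → Measure (ℕ → Fin k)) (hPprob : ∀ x, IsProbabilityMeasure (P x))
    (hPcyl : ∀ x ω n, P x (cyl ω n) = ENNReal.ofReal (pIter h p ω n x))
    -- the measure `μ₊(E) = ∫ p_x(E) dν(x)`
    (μplus : Measure (ℕ → Fin k))
    (hμplus : ∀ E : Set (ℕ → Fin k), MeasurableSet E → μplus E = ∫⁻ x, P x E ∂ν)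
    -- the natural extension: a two-sided shift-invariant probability measure with
    -- marginal `μ₊` on the nonnegative coordinates
    (μ : Measure (ℤ → Fin k)) [IsProbabilityMeasure μ]
    (hμinv : Measure.map (fun (ω : ℤ → Fin k) (i : ℤ) => ω (i + 1)) μ = μ)
    (hmarginal : Measure.map (fun (ω : ℤ → Fin k) (n : ℕ) => ω (n : ℤ)) μ = μplus) :
    Ergodic (fun (ω : ℤ → Fin k) (i : ℤ) => ω (i + 1)) μ := by
  exact natural_extension_ergodic_general hlip hpbelow hpsum hdini hcoa hinv ⟨hPprob, hPcyl⟩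
    ⟨measurable_leftShift, hμinv⟩ (hmarginal ▸ hμplus)
end
end

section
/- Let (h_i, p_i) be a contracting-on-average iterated function system on ℝ^d as above with invariant measure ν, μ₋ the σ-invariant measure on Σ determined by μ₋(C_{ω^n}) = μ₊(C_{ω^{−n}}) where μ₊(E) = ∫ p_x(E) dν(x), and π the coding map π(ω) = lim_n h_{ω^{−n}}(x₀) (defined μ₋-a.e.). Let z₁,…,z_k ∈ L¹(ℝ^d, ν) with z := ∫ ∑_j p_j(x) z_j(x) dν(x) < 0. Then for every ε > 0 and μ₋-almost every ω ∈ Σ there exists K > 0 such that for all n ≥ 1: K^{-1}·exp(n(1+ε)z) ≤ exp(z_{ω^{−n}}(π(σ^n ω))) ≤ K·exp(n(1−ε)z). -/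
/-!
Since `π(jω) = hⱼ(π(ω))`, the coding map semiconjugates prepending a symbol to the function system,
and `μ₋` turns out to be stationary for the weights `pⱼ ∘ π` on sequences, with `π_* μ₋ = ν`: both
come from iterating the Markov operator of the skew product `(ω, x) ↦ (jω, hⱼ x)`, which by average
contraction forgets the starting point. The shift is ergodic for `μ₋`: an invariant set has the same
indicator as the limit of Markov iterates of the indicators of cylinder sets approximating it; the
latter are uniformly Hölder in `π(ω)`, and average contraction forces an invariant Hölder limit to
be constant.

The reversed sums `z_{ω^{-n}}(π(σⁿω))` are then the Birkhoff sums over the shift of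
`f(ω) = z_{ω₁}(π(σω))`, whose mean is `z`. By the maximal ergodic argument an integrable function
of negative mean has almost surely bounded Birkhoff sums; apply this to `f - (1-ε)z` and
`(1+ε)z - f`.
-/

open MeasureTheory Metric Filter ENNReal NNReal

noncomputable section

variable {k : ℕ}

/-- `hIterRev h ω n = h_{ω^{-n}} = h_{ω 0} ∘ h_{ω 1} ∘ ⋯ ∘ h_{ω (n-1)}`. -/
def hIterRev {X : Type*} (h : Fin k → X → X) (ω : ℕ → Fin k) : ℕ → X → X
  | 0 => id
  | n + 1 => fun x => hIterRev h ω n (h (ω n) x)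

/-- `zIterRev h z ω n x = z_{ω^{-n}}(x)`, the ergodic sum along the reversed word
`ω_n ω_{n-1} … ω_1`. -/
def zIterRev {X : Type*} (h : Fin k → X → X) (z : Fin k → X → ℝ)
    (ω : ℕ → Fin k) : ℕ → X → ℝ
  | 0 => fun _ => 0
  | n + 1 => fun x => z (ω n) x + zIterRev h z ω n (h (ω n) x)

/-- The cylinder `C_{ω^{-n}}` of sequences beginning with the reversed word
`ω_n ω_{n-1} … ω_1`. -/
def cylRev (ω : ℕ → Fin k) (n : ℕ) : Set (ℕ → Fin k) :=
  {τ | ∀ i < n, τ i = ω (n - 1 - i)}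

section MarkovOperator

variable {ι Y Z : Type*} [Fintype ι]

/-- Positive place-dependent probability weights. -/
structure IsProbWeight (q : ι → Y → ℝ) : Prop where
  pos : ∀ j y, 0 < q j y
  sum_eq_one : ∀ y, ∑ j, q j y = 1

/-- The Markov operator `G ↦ ∑ⱼ qⱼ · (G ∘ Hⱼ)` of the function system `H` with place-dependent
weights `q`. -/
def markovOp (H : ι → Y → Y) (q : ι → Y → ℝ) (G : Y → ℝ) (y : Y) : ℝ :=
  ∑ j, q j y * G (H j y)

lemma abs_sum_mul_le_sum_mul {w F B : ι → ℝ} (hw : ∀ j, 0 ≤ w j) (hF : ∀ j, |F j| ≤ B j) :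
    |∑ j, w j * F j| ≤ ∑ j, w j * B j :=
  (Finset.abs_sum_le_sum_abs _ _).trans <| Finset.sum_le_sum fun j _ => by
    rw [abs_mul, abs_of_nonneg (hw j)]
    exact mul_le_mul_of_nonneg_left (hF j) (hw j)

namespace IsProbWeight

variable {q : ι → Y → ℝ} (hq : IsProbWeight q)
include hq

lemma nonneg (j : ι) (y : Y) : 0 ≤ q j y := (hq.pos j y).le

lemma le_one (j : ι) (y : Y) : q j y ≤ 1 :=
  (hq.sum_eq_one y).symm ▸ Finset.single_le_sum (fun i _ => hq.nonneg i y) (Finset.mem_univ j)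

lemma comp (φ : Z → Y) : IsProbWeight fun j z => q j (φ z) :=
  ⟨fun j z => hq.pos j (φ z), fun z => hq.sum_eq_one (φ z)⟩

lemma abs_markovOp_le {H : ι → Y → Y} {G : Y → ℝ} {B : ℝ} (hG : ∀ y, |G y| ≤ B) (y : Y) :
    |markovOp H q G y| ≤ B :=
  (abs_sum_mul_le_sum_mul (fun j => hq.nonneg j y) fun j => hG (H j y)).trans_eq <| by
    rw [← Finset.sum_mul, hq.sum_eq_one, one_mul]

lemma abs_iterate_markovOp_le {H : ι → Y → Y} {G : Y → ℝ} {B : ℝ} (hG : ∀ y, |G y| ≤ B) (n : ℕ) :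
    ∀ y, |(markovOp H q)^[n] G y| ≤ B :=
  Function.Iterate.rec (fun F : Y → ℝ => ∀ y, |F y| ≤ B) hG (fun _ => hq.abs_markovOp_le) n

lemma iterate_markovOp_sub {H : ι → Y → Y} {F : Y → ℝ} (hF : ∀ j y, F (H j y) = F y)
    (G : Y → ℝ) (n : ℕ) : (markovOp H q)^[n] G - F = (markovOp H q)^[n] (G - F) := by
  have hstep (K : Y → ℝ) : markovOp H q (K - F) = markovOp H q K - F := by
    ext y
    simp only [markovOp, Pi.sub_apply, mul_sub, hF, Finset.sum_sub_distrib, ← Finset.sum_mul,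
      hq.sum_eq_one, one_mul]
  exact ((Function.Semiconj.iterate_right (f := (· - F)) fun K => (hstep K).symm) n).eq G

end IsProbWeight

lemma continuous_markovOp [TopologicalSpace Y] {H : ι → Y → Y} {q : ι → Y → ℝ} {G : Y → ℝ}
    (hH : ∀ j, Continuous (H j)) (hq : ∀ j, Continuous (q j)) (hG : Continuous G) :
    Continuous (markovOp H q G) :=
  continuous_finsetSum _ fun j _ => (hq j).mul (hG.comp (hH j))

lemma iterate_markovOp_comp {H : ι → Y → Y} {q : ι → Y → ℝ} {H' : ι → Z → Z} {q' : ι → Z → ℝ}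
    {φ : Y → Z} {A : Set Y} (hA : ∀ j, Set.MapsTo (H j) A A)
    (hφ : ∀ y ∈ A, ∀ j, φ (H j y) = H' j (φ y)) (hq : ∀ j y, q j y = q' j (φ y))
    (G : Z → ℝ) (n : ℕ) {y : Y} (hy : y ∈ A) :
    (markovOp H q)^[n] (G ∘ φ) y = (markovOp H' q')^[n] G (φ y) := by
  induction n generalizing y with
  | zero => rfl
  | succ n ih =>
    simp only [Function.iterate_succ_apply', markovOp]
    exact Finset.sum_congr rfl fun j _ => by rw [ih (hA j hy), hφ y hy, hq]

variable [MeasurableSpace Y]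

/-- The dual `∑ⱼ (Hⱼ)_* (qⱼ m)` of the Markov operator, acting on measures. -/
def markovDual (H : ι → Y → Y) (q : ι → Y → ℝ) (m : Measure Y) : Measure Y :=
  ∑ j, (m.withDensity fun y => ENNReal.ofReal (q j y)).map (H j)

/-- The measure `m` is stationary for the function system `H` with weights `q`. The weights need
only be measurable up to a null set: later they are read off an a.e. defined coding map. -/
structure IsStationaryMeasure_s9 (H : ι → Y → Y) (q : ι → Y → ℝ) (m : Measure Y) : Prop where
  measurable_map : ∀ j, Measurable (H j)
  aemeasurable_weight : ∀ j, AEMeasurable (q j) m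
  markovDual_eq : markovDual H q m = m

variable {H : ι → Y → Y} {q : ι → Y → ℝ} {m : Measure Y} {G : Y → ℝ}

lemma integrable_markovOp_and_integral_markovDual (hq : IsProbWeight q)
    (hH : ∀ j, Measurable (H j)) (hqm : ∀ j, AEMeasurable (q j) m)
    (hG : Integrable G (markovDual H q m)) :
    Integrable (markovOp H q G) m ∧ ∫ y, G y ∂markovDual H q m = ∫ y, markovOp H q G y ∂m := by
  have hint j : Integrable G ((m.withDensity fun y => ENNReal.ofReal (q j y)).map (H j)) :=
    integrable_finsetSum_measure.1 hG j (Finset.mem_univ j)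
  have hdens j : AEMeasurable (fun y => ENNReal.ofReal (q j y)) m := (hqm j).ennreal_ofReal
  have hfin j : ∀ᵐ y ∂m, ENNReal.ofReal (q j y) < ∞ := ae_of_all _ fun _ => ENNReal.ofReal_lt_top
  have hterm j : Integrable (fun y => q j y * G (H j y)) m := by
    have := (integrable_withDensity_iff_integrable_smul₀' (hdens j) (hfin j)).1
      ((integrable_map_measure (hint j).1 (hH j).aemeasurable).1 (hint j))
    simpa only [ENNReal.toReal_ofReal (hq.nonneg j _), smul_eq_mul, Function.comp_apply] using this
  refine ⟨integrable_finsetSum _ fun j _ => hterm j, ?_⟩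
  simp only [markovOp]
  rw [markovDual, integral_finsetSum_measure fun j _ => hint j,
    integral_finsetSum _ fun j _ => hterm j]
  refine Finset.sum_congr rfl fun j _ => ?_
  rw [integral_map (hH j).aemeasurable (hint j).1,
    integral_withDensity_eq_integral_toReal_smul₀ (hdens j) (hfin j)]
  simp only [ENNReal.toReal_ofReal (hq.nonneg j _), smul_eq_mul]

lemma isFiniteMeasure_markovDual [IsFiniteMeasure m] (hq : IsProbWeight q) :
    IsFiniteMeasure (markovDual H q m) := by
  have hfin j : IsFiniteMeasure (m.withDensity fun y => ENNReal.ofReal (q j y)) :=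
    isFiniteMeasure_withDensity_ofReal (HasFiniteIntegral.of_bounded (C := 1) <|
      ae_of_all _ fun y => by
        rw [Real.norm_eq_abs, abs_of_nonneg (hq.nonneg j y)]; exact hq.le_one j y)
  unfold markovDual
  infer_instance

namespace IsStationaryMeasure_s9

variable (hm : IsStationaryMeasure_s9 H q m) (hq : IsProbWeight q)
include hm hq

lemma integrable_markovOp (hG : Integrable G m) : Integrable (markovOp H q G) m :=
  (integrable_markovOp_and_integral_markovDual hq hm.measurable_map hm.aemeasurable_weight
    (hm.markovDual_eq.symm ▸ hG)).1

lemma integral_markovOp (hG : Integrable G m) : ∫ y, markovOp H q G y ∂m = ∫ y, G y ∂m := by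
  rw [← (integrable_markovOp_and_integral_markovDual hq hm.measurable_map hm.aemeasurable_weight
    (hm.markovDual_eq.symm ▸ hG)).2, hm.markovDual_eq]

lemma integrable_iterate_markovOp (hG : Integrable G m) (n : ℕ) :
    Integrable ((markovOp H q)^[n] G) m :=
  Function.Iterate.rec (fun F => Integrable F m) hG (fun _ => hm.integrable_markovOp hq) n

lemma integral_iterate_markovOp (hG : Integrable G m) (n : ℕ) :
    ∫ y, (markovOp H q)^[n] G y ∂m = ∫ y, G y ∂m := by
  induction n with
  | zero => rfl
  | succ n ih =>
    rw [Function.iterate_succ', ← ih]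
    exact hm.integral_markovOp hq (hm.integrable_iterate_markovOp hq hG n)

lemma eLpNorm_one_iterate_markovOp_le (hG : Integrable G m) (n : ℕ) :
    eLpNorm ((markovOp H q)^[n] G) 1 m ≤ eLpNorm G 1 m := by
  induction n with
  | zero => rfl
  | succ n ih =>
    have hGn := hm.integrable_iterate_markovOp hq hG n
    refine le_trans ?_ ih
    rw [Function.iterate_succ_apply', eLpNorm_one_eq_lintegral_enorm,
      eLpNorm_one_eq_lintegral_enorm,
      ← ofReal_integral_norm_eq_lintegral_enorm (hm.integrable_markovOp hq hGn),
      ← ofReal_integral_norm_eq_lintegral_enorm hGn, ← hm.integral_markovOp hq hGn.norm]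
    exact ENNReal.ofReal_le_ofReal <| integral_mono (hm.integrable_markovOp hq hGn).norm
      (hm.integrable_markovOp hq hGn.norm)
      fun y => abs_sum_mul_le_sum_mul (fun j => hq.nonneg j y) fun _ => le_rfl

lemma quasiMeasurePreserving (j : ι) : Measure.QuasiMeasurePreserving (H j) m m := by
  have hle : (m.withDensity fun y => ENNReal.ofReal (q j y)).map (H j) ≤ m := by
    conv_rhs => rw [← hm.markovDual_eq]
    exact Finset.single_le_sum (f := fun j => (m.withDensity _).map (H j))
      (fun _ _ => Measure.zero_le _) (Finset.mem_univ j)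
  have hdens : m ≪ m.withDensity fun y => ENNReal.ofReal (q j y) :=
    withDensity_absolutelyContinuous' (hm.aemeasurable_weight j).ennreal_ofReal
      (ae_of_all _ fun y => (ENNReal.ofReal_pos.2 (hq.pos j y)).ne')
  exact ⟨hm.measurable_map j, (hdens.map (hm.measurable_map j)).trans
    (Measure.absolutelyContinuous_of_le hle)⟩

end IsStationaryMeasure_s9

omit [Fintype ι] in
lemma exists_forwardInvariant_of_ae [Countable ι]
    (hH : ∀ j, Measure.QuasiMeasurePreserving (H j) m m) {Q : Y → Prop} (hQ : ∀ᵐ y ∂m, Q y) :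
    ∃ A : Set Y, (∀ᵐ y ∂m, y ∈ A) ∧ (∀ j, Set.MapsTo (H j) A A) ∧ ∀ y ∈ A, Q y := by
  refine ⟨{y | ∀ l : List ι, Q (l.foldl (fun y j => H j y) y)}, ae_all_iff.2 fun l => ?_,
    fun j y hy l => hy (j :: l), fun y hy => hy []⟩
  induction l with
  | nil => exact hQ
  | cons j l ih => exact (hH j).ae ih

end MarkovOperator

section SymbolSequences

variable {ι : Type*}

/-- The sequence `j ω₀ ω₁ …`. -/
def seqCons (j : ι) (ω : ℕ → ι) : ℕ → ι
  | 0 => j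
  | n + 1 => ω n

/-- The left shift `σ` on sequences. -/
def seqShift (ω : ℕ → ι) : ℕ → ι := fun i => ω (i + 1)

/-- The sequence `v₀ … vₙ₋₁ ω₀ ω₁ …`. -/
def prependWord {n : ℕ} (v : Fin n → ι) (ω : ℕ → ι) : ℕ → ι :=
  fun i => if hi : i < n then v ⟨i, hi⟩ else ω (i - n)

lemma iterate_seqShift (n : ℕ) (ω : ℕ → ι) : seqShift^[n] ω = fun i => ω (i + n) := by
  induction n generalizing ω with
  | zero => rfl
  | succ n ih => rw [Function.iterate_succ_apply, ih]; rfl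

lemma prependWord_zero (v : Fin 0 → ι) (ω : ℕ → ι) : prependWord v ω = ω := rfl

lemma prependWord_of_lt {n i : ℕ} (v : Fin n → ι) (ω : ℕ → ι) (hi : i < n) :
    prependWord v ω i = v ⟨i, hi⟩ := dif_pos hi

lemma prependWord_cons {n : ℕ} (j : ι) (v : Fin n → ι) (ω : ℕ → ι) :
    prependWord (Fin.cons j v : Fin (n + 1) → ι) ω = seqCons j (prependWord v ω) := by
  funext i
  cases i with
  | zero => rfl
  | succ i =>
    simp only [prependWord, seqCons, Nat.add_lt_add_iff_right, Nat.add_sub_add_right]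
    rfl

lemma sum_word_succ [Fintype ι] {M : Type*} [AddCommMonoid M] {n : ℕ}
    (F : (Fin (n + 1) → ι) → M) : ∑ v, F v = ∑ v : Fin n → ι, ∑ j, F (Fin.cons j v) := by
  rw [← (Fin.consEquiv fun _ : Fin (n + 1) => ι).sum_comp, Fintype.sum_prod_type, Finset.sum_comm]
  rfl

variable [TopologicalSpace ι]

lemma continuous_seqShift : Continuous (seqShift : (ℕ → ι) → ℕ → ι) :=
  continuous_pi fun i => continuous_apply (i + 1)

lemma continuous_seqCons (j : ι) : Continuous (seqCons j) :=
  continuous_pi fun i => match i with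
    | 0 => continuous_const
    | i + 1 => continuous_apply i

lemma tendsto_prependWord_restrict (ω ω₀ : ℕ → ι) :
    Tendsto (fun n => prependWord (fun i : Fin n => ω i) ω₀) atTop (nhds ω) :=
  tendsto_pi_nhds.2 fun i => tendsto_const_nhds.congr' <| by
    filter_upwards [eventually_gt_atTop i] with n hn
    rw [prependWord_of_lt _ _ hn]

end SymbolSequences

section ReversedWords

variable {X : Type*} {h : Fin k → X → X} {p : Fin k → X → ℝ}

/-- `pIterRev h p ω n x = p_{ω^{-n}}(x)`, the weight of the reversed word `ω_n ω_{n-1} … ω_1`. -/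
def pIterRev (h : Fin k → X → X) (p : Fin k → X → ℝ) : (ℕ → Fin k) → ℕ → X → ℝ
  | _, 0 => fun _ => 1
  | ω, n + 1 => fun x =>
    pIterRev h p (seqShift ω) n x * p (ω 0) (hIterRev h (seqShift ω) n x)

lemma hIterRev_succ_eq (ω : ℕ → Fin k) (n : ℕ) (x : X) :
    hIterRev h ω (n + 1) x = h (ω 0) (hIterRev h (seqShift ω) n x) := by
  induction n generalizing x with
  | zero => rfl
  | succ n ih => exact ih (h (ω (n + 1)) x)

lemma hIterRev_seqCons_succ (j : Fin k) (ω : ℕ → Fin k) (n : ℕ) (x : X) :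
    hIterRev h (seqCons j ω) (n + 1) x = h j (hIterRev h ω n x) :=
  hIterRev_succ_eq (seqCons j ω) n x

lemma pIterRev_seqCons_succ (j : Fin k) (ω : ℕ → Fin k) (n : ℕ) (x : X) :
    pIterRev h p (seqCons j ω) (n + 1) x = pIterRev h p ω n x * p j (hIterRev h ω n x) := rfl

lemma dependsOn_hIterRev (n : ℕ) (x : X) :
    DependsOn (fun ω : ℕ → Fin k => hIterRev h ω n x) (Set.Iio n) := by
  intro ω τ hωτ
  induction n generalizing x with
  | zero => rfl
  | succ n ih =>
    simp only [hIterRev]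
    rw [hωτ n n.lt_succ_self]
    exact ih (h (τ n) x) fun i hi => hωτ i (hi.trans n.lt_succ_self)

lemma hIter_eq_hIterRev_and_pIter_eq_pIterRev {ω τ : ℕ → Fin k} {n : ℕ}
    (hτ : ∀ i < n, τ i = ω (n - 1 - i)) (x : X) :
    hIter h τ n x = hIterRev h ω n x ∧ pIter h p τ n x = pIterRev h p ω n x := by
  induction n generalizing ω with
  | zero => exact ⟨rfl, rfl⟩
  | succ n ih =>
    have hlast : τ n = ω 0 := by simpa using hτ n n.lt_succ_self
    obtain ⟨hh, hp⟩ := ih (ω := seqShift ω) fun i hi => by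
      rw [hτ i (by lia), seqShift]; congr 1; lia
    exact ⟨by simp only [hIterRev_succ_eq, hIter, hlast, hh],
      by simp only [pIter, pIterRev, hlast, hh, hp]⟩

lemma IsProbWeight.pIterRev_nonneg (hp : IsProbWeight p) (ω : ℕ → Fin k) (n : ℕ) (x : X) :
    0 ≤ pIterRev h p ω n x := by
  induction n generalizing ω with
  | zero => exact zero_le_one
  | succ n ih => exact mul_nonneg (ih _) (hp.nonneg _ _)

lemma IsProbWeight.pIterRev_le_one (hp : IsProbWeight p) (ω : ℕ → Fin k) (n : ℕ) (x : X) :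
    pIterRev h p ω n x ≤ 1 := by
  induction n generalizing ω with
  | zero => exact le_rfl
  | succ n ih => exact mul_le_one₀ (ih _) (hp.nonneg _ _) (hp.le_one _ _)

lemma IsProbWeight.sum_pIterRev (hp : IsProbWeight p) (ω : ℕ → Fin k) (n : ℕ) (x : X) :
    ∑ v : Fin n → Fin k, pIterRev h p (prependWord v ω) n x = 1 := by
  induction n with
  | zero => simp only [pIterRev, Finset.univ_unique, Finset.sum_const, Finset.card_singleton,
      one_smul]
  | succ n ih =>
    simp only [sum_word_succ, prependWord_cons, pIterRev_seqCons_succ, ← Finset.mul_sum,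
      hp.sum_eq_one, mul_one, ih]

/-- The Markov operator of the skew product `(ω, x) ↦ (jω, hⱼ x)` with weights `pⱼ(x)`. -/
def skewOp (h : Fin k → X → X) (p : Fin k → X → ℝ) :
    ((ℕ → Fin k) × X → ℝ) → (ℕ → Fin k) × X → ℝ :=
  markovOp (fun j => Prod.map (seqCons j) (h j)) fun j y => p j y.2

lemma iterate_skewOp (G : (ℕ → Fin k) × X → ℝ) (n : ℕ) (ω : ℕ → Fin k) (x : X) :
    (skewOp h p)^[n] G (ω, x) = ∑ v : Fin n → Fin k, pIterRev h p (prependWord v ω) n x *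
      G (prependWord v ω, hIterRev h (prependWord v ω) n x) := by
  induction n generalizing G with
  | zero => simp [pIterRev, prependWord_zero, hIterRev]
  | succ n ih =>
    rw [Function.iterate_succ_apply, ih, sum_word_succ]
    refine Finset.sum_congr rfl fun v _ => ?_
    rw [skewOp, markovOp, Finset.mul_sum]
    refine Finset.sum_congr rfl fun j _ => ?_
    rw [prependWord_cons, hIterRev_seqCons_succ, pIterRev_seqCons_succ, mul_assoc]
    rfl

lemma iterate_skewOp_eq_of_dependsOn {G : (ℕ → Fin k) × X → ℝ} {n : ℕ}
    (hG : ∀ x, DependsOn (fun ω => G (ω, x)) (Set.Iio n)) (ω τ : ℕ → Fin k) (x : X) :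
    (skewOp h p)^[n] G (ω, x) = (skewOp h p)^[n] G (τ, x) := by
  induction n generalizing G with
  | zero => exact hG x fun i hi => absurd hi i.not_lt_zero
  | succ n ih =>
    refine ih fun x ω τ hωτ => ?_
    simp only [skewOp, markovOp, Prod.map_apply]
    refine Finset.sum_congr rfl fun j _ => congrArg (p j x * ·) (hG (h j x) fun i hi => ?_)
    cases i with
    | zero => rfl
    | succ i => exact hωτ i (Nat.lt_of_succ_lt_succ hi)

variable [TopologicalSpace X]

lemma continuous_hIterRev (hh : ∀ j, Continuous (h j)) (ω : ℕ → Fin k) (n : ℕ) :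
    Continuous (hIterRev h ω n) := by
  induction n with
  | zero => exact continuous_id
  | succ n ih => exact ih.comp (hh _)

lemma continuous_pIterRev (hh : ∀ j, Continuous (h j)) (hp : ∀ j, Continuous (p j))
    (ω : ℕ → Fin k) (n : ℕ) : Continuous (pIterRev h p ω n) := by
  induction n generalizing ω with
  | zero => exact continuous_const
  | succ n ih => exact (ih _).mul ((hp _).comp (continuous_hIterRev hh _ n))

lemma continuous_skewOp (hh : ∀ j, Continuous (h j)) (hp : ∀ j, Continuous (p j))
    {G : (ℕ → Fin k) × X → ℝ} (hG : Continuous G) : Continuous (skewOp h p G) :=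
  continuous_markovOp (fun j => (continuous_seqCons j).prodMap (hh j))
    (fun j => (hp j).comp continuous_snd) hG

omit [TopologicalSpace X] in
lemma measurable_hIterRev_left [MeasurableSpace X] (hh : ∀ j, Measurable (h j)) (n : ℕ) (x : X) :
    Measurable fun ω : ℕ → Fin k => hIterRev h ω n x := by
  induction n with
  | zero => exact measurable_const
  | succ n ih =>
    simp only [hIterRev_succ_eq]
    have hjoint : Measurable fun q : Fin k × X => h q.1 q.2 :=
      measurable_from_prod_countable_right hh
    exact hjoint.comp ((measurable_pi_apply 0).prodMk (ih.comp continuous_seqShift.measurable))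

end ReversedWords

section ContractiveSystem

variable {X : Type*} [MetricSpace X]

/-- The function system `h` with weights `p` contracts the distance `dist ^ s` by the factor `ρ`
on average, and the weights are Hölder with exponent `s`. -/
structure IsContractiveOnAverage (h : Fin k → X → X) (p : Fin k → X → ℝ) (s ρ C : ℝ) :
    Prop where
  isProbWeight : IsProbWeight p
  continuous_map : ∀ j, Continuous (h j)
  exponent_pos : 0 < s
  exponent_le_one : s ≤ 1
  rate_nonneg : 0 ≤ ρ
  rate_lt_one : ρ < 1
  const_nonneg : 0 ≤ C
  abs_weight_sub_le : ∀ j x y, |p j x - p j y| ≤ C * dist x y ^ s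
  sum_mul_dist_rpow_le : ∀ x y, ∑ j, p j x * dist (h j x) (h j y) ^ s ≤ ρ * dist x y ^ s

/-- Test functions on `Ω × X` bounded by `B` and `s`-Hölder in the second variable with constant
`D`. -/
structure IsHolderTest {Ω : Type*} (s B D : ℝ) (G : Ω × X → ℝ) : Prop where
  const_nonneg : 0 ≤ D
  abs_le : ∀ y, |G y| ≤ B
  abs_sub_le : ∀ ω x y, |G (ω, x) - G (ω, y)| ≤ D * dist x y ^ s

lemma isHolderTest_comp_fst {Ω : Type*} {s B D : ℝ} (hD : 0 ≤ D) {F : Ω → ℝ}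
    (hF : ∀ ω, |F ω| ≤ B) : IsHolderTest s B D (F ∘ (Prod.fst : Ω × X → Ω)) :=
  ⟨hD, fun y => hF y.1, fun ω x y => by
    simpa using mul_nonneg hD (Real.rpow_nonneg (dist_nonneg (x := x) (y := y)) s)⟩

omit [MetricSpace X] in
lemma le_max_mul_rpow_of_exponent_le {a K B t s α : ℝ} (ht : 0 ≤ t) (hs : 0 ≤ s) (hα : 0 < α)
    (hsα : s ≤ α) (hK : 0 ≤ K) (haK : a ≤ K * t ^ α) (haB : a ≤ B) : a ≤ max K B * t ^ s := by
  rcases le_total t 1 with ht1 | ht1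
  · calc a ≤ K * t ^ α := haK
      _ ≤ max K B * t ^ s := mul_le_mul (le_max_left _ _)
          (Real.rpow_le_rpow_of_exponent_ge_of_imp ht ht1 hsα fun _ h0 => absurd h0 hα.ne')
          (Real.rpow_nonneg ht α) (hK.trans (le_max_left _ _))
  · exact (haB.trans (le_max_right K B)).trans
      (le_mul_of_one_le_right (hK.trans (le_max_left _ _)) (Real.one_le_rpow ht1 hs))

lemma tendsto_rpow_dist_nhds {s : ℝ} (hs : 0 < s) (D : ℝ) (x : X) :
    Tendsto (fun y => D * dist y x ^ s) (nhds x) (nhds 0) := by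
  have hcont : Continuous fun y => D * dist y x ^ s :=
    continuous_const.mul ((continuous_id.dist continuous_const).rpow_const fun _ => Or.inr hs.le)
  simpa [Real.zero_rpow hs.ne'] using hcont.tendsto x

namespace IsContractiveOnAverage

variable {h : Fin k → X → X} {p : Fin k → X → ℝ} {s ρ C : ℝ}
  (H : IsContractiveOnAverage h p s ρ C)
include H

lemma continuous_weight (j : Fin k) : Continuous (p j) :=
  continuous_iff_continuousAt.2 fun x => tendsto_iff_dist_tendsto_zero.2 <|
    squeeze_zero (fun _ => dist_nonneg) (fun y => H.abs_weight_sub_le j y x)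
      (tendsto_rpow_dist_nhds H.exponent_pos C x)

lemma tendsto_rate_pow_mul (a : ℝ) : Tendsto (fun n : ℕ => ρ ^ n * a) atTop (nhds 0) := by
  simpa using (tendsto_pow_atTop_nhds_zero_of_lt_one H.rate_nonneg H.rate_lt_one).mul_const a

lemma sum_pIterRev_mul_dist_rpow_le (ω : ℕ → Fin k) (n : ℕ) (x y : X) :
    ∑ v : Fin n → Fin k, pIterRev h p (prependWord v ω) n x *
      dist (hIterRev h (prependWord v ω) n x) (hIterRev h (prependWord v ω) n y) ^ s ≤
        ρ ^ n * dist x y ^ s := by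
  induction n with
  | zero => simp [pIterRev, hIterRev]
  | succ n ih =>
    simp only [sum_word_succ, prependWord_cons, hIterRev_seqCons_succ, pIterRev_seqCons_succ,
      mul_assoc, ← Finset.mul_sum]
    set W := fun v : Fin n → Fin k => pIterRev h p (prependWord v ω) n x
    set g := fun (v : Fin n → Fin k) (x : X) => hIterRev h (prependWord v ω) n x
    calc ∑ v, W v * ∑ j, p j (g v x) * dist (h j (g v x)) (h j (g v y)) ^ s
      _ ≤ ∑ v, W v * (ρ * dist (g v x) (g v y) ^ s) := Finset.sum_le_sum fun v _ =>
          mul_le_mul_of_nonneg_left (H.sum_mul_dist_rpow_le _ _) (H.isProbWeight.pIterRev_nonneg ..)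
      _ = ρ * ∑ v, W v * dist (g v x) (g v y) ^ s := by
          rw [Finset.mul_sum]; exact Finset.sum_congr rfl fun v _ => by ring
      _ ≤ ρ * (ρ ^ n * dist x y ^ s) := mul_le_mul_of_nonneg_left ih H.rate_nonneg
      _ = ρ ^ (n + 1) * dist x y ^ s := by ring

lemma isHolderTest_skewOp {B D : ℝ} (hBD : k * C * B + ρ * D ≤ D)
    {G : (ℕ → Fin k) × X → ℝ} (hG : IsHolderTest s B D G) : IsHolderTest s B D (skewOp h p G) := by
  refine ⟨hG.const_nonneg, (H.isProbWeight.comp Prod.snd).abs_markovOp_le hG.abs_le,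
    fun ω x y => ?_⟩
  have hsplit : skewOp h p G (ω, x) - skewOp h p G (ω, y) =
      ∑ j, p j x * (G (seqCons j ω, h j x) - G (seqCons j ω, h j y)) +
        ∑ j, (p j x - p j y) * G (seqCons j ω, h j y) := by
    rw [← Finset.sum_add_distrib, skewOp, markovOp, markovOp, ← Finset.sum_sub_distrib]
    exact Finset.sum_congr rfl fun j _ => by simp only [Prod.map_apply]; ring
  have hmaps : |∑ j, p j x * (G (seqCons j ω, h j x) - G (seqCons j ω, h j y))| ≤
      D * (ρ * dist x y ^ s) := by
    refine (abs_sum_mul_le_sum_mul (fun j => H.isProbWeight.nonneg j x)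
      fun j => hG.abs_sub_le _ _ _).trans ?_
    simp only [mul_left_comm _ D, ← Finset.mul_sum]
    exact mul_le_mul_of_nonneg_left (H.sum_mul_dist_rpow_le x y) hG.const_nonneg
  have hweights : |∑ j, (p j x - p j y) * G (seqCons j ω, h j y)| ≤
      ∑ _j : Fin k, C * dist x y ^ s * B := by
    refine (Finset.abs_sum_le_sum_abs _ _).trans (Finset.sum_le_sum fun j _ => ?_)
    rw [abs_mul]
    exact mul_le_mul (H.abs_weight_sub_le j x y) (hG.abs_le _) (abs_nonneg _)
      (mul_nonneg H.const_nonneg (by positivity))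
  calc |skewOp h p G (ω, x) - skewOp h p G (ω, y)|
    _ ≤ D * (ρ * dist x y ^ s) + ∑ _j : Fin k, C * dist x y ^ s * B := by
        rw [hsplit]; exact (abs_add_le _ _).trans (add_le_add hmaps hweights)
    _ = (k * C * B + ρ * D) * dist x y ^ s := by
        rw [Finset.sum_const, Finset.card_univ, Fintype.card_fin, nsmul_eq_mul]; ring
    _ ≤ D * dist x y ^ s := mul_le_mul_of_nonneg_right hBD (by positivity)

lemma isHolderTest_iterate_skewOp {B D : ℝ} (hBD : k * C * B + ρ * D ≤ D)
    {G : (ℕ → Fin k) × X → ℝ} (hG : IsHolderTest s B D G) (n : ℕ) :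
    IsHolderTest s B D ((skewOp h p)^[n] G) :=
  Function.Iterate.rec (IsHolderTest s B D) hG (fun _ => H.isHolderTest_skewOp hBD) n

lemma exists_invariant_holderConst (B : ℝ) : ∃ D ≥ 0, k * C * B + ρ * D ≤ D := by
  have hρ : 0 < 1 - ρ := sub_pos.2 H.rate_lt_one
  refine ⟨max 0 (k * C * B / (1 - ρ)), le_max_left _ _, ?_⟩
  have := (div_le_iff₀ hρ).1 (le_max_right 0 (k * C * B / (1 - ρ)))
  linarith

lemma continuous_iterate_skewOp {G : (ℕ → Fin k) × X → ℝ} (hG : Continuous G) (n : ℕ) :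
    Continuous ((skewOp h p)^[n] G) :=
  Function.Iterate.rec Continuous hG
    (fun _ => continuous_skewOp H.continuous_map H.continuous_weight) n

lemma abs_iterate_skewOp_sub_sum_le {B D : ℝ} {G : (ℕ → Fin k) × X → ℝ}
    (hG : IsHolderTest s B D G) (ω₀ : ℕ → Fin k) (n : ℕ) (x x₀ : X) :
    |(skewOp h p)^[n] G (ω₀, x) - ∑ v : Fin n → Fin k, pIterRev h p (prependWord v ω₀) n x *
        G (prependWord v ω₀, hIterRev h (prependWord v ω₀) n x₀)| ≤
      min (2 * B) (ρ ^ n * (D * dist x x₀ ^ s)) := by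
  have hW (v : Fin n → Fin k) := H.isProbWeight.pIterRev_nonneg (h := h) (prependWord v ω₀) n x
  have hdiff (a b : (ℕ → Fin k) × X) : |G a - G b| ≤ 2 * B := by
    linarith [abs_sub (G a) (G b), hG.abs_le a, hG.abs_le b]
  rw [iterate_skewOp, ← Finset.sum_sub_distrib]
  simp only [← mul_sub]
  refine le_min ((abs_sum_mul_le_sum_mul hW fun v => hdiff _ _).trans_eq ?_)
    ((abs_sum_mul_le_sum_mul hW fun v => hG.abs_sub_le _ _ _).trans ?_)
  · rw [← Finset.sum_mul, H.isProbWeight.sum_pIterRev, one_mul]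
  · simp only [mul_left_comm _ D, ← Finset.mul_sum]
    exact mul_le_mul_of_nonneg_left (H.sum_pIterRev_mul_dist_rpow_le ω₀ n x x₀) hG.const_nonneg

end IsContractiveOnAverage

end ContractiveSystem

section Coding

variable {X : Type*} [MetricSpace X] [MeasurableSpace X]

/-- `μ` gives the cylinder `C_{ω^n}` the `ν`-average of the weight `p_{ω^{-n}}`, and `π` is the
coding map `π(ω) = lim h_{ω^{-n}}(x₀)`, defined `μ`-a.e. -/
structure IsBackwardCoding (h : Fin k → X → X) (p : Fin k → X → ℝ) (ν : Measure X)
    (μ : Measure (ℕ → Fin k)) (x₀ : X) (π : (ℕ → Fin k) → X) : Prop where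
  measureReal_cyl : ∀ ω n, μ.real (cyl ω n) = ∫ x, pIterRev h p ω n x ∂ν
  ae_tendsto : ∀ᵐ ω ∂μ, Tendsto (fun n => hIterRev h ω n x₀) atTop (nhds (π ω))

lemma integral_prependWord_restrict (μ : Measure (ℕ → Fin k)) [IsFiniteMeasure μ]
    (F : (ℕ → Fin k) → ℝ) (ω₀ : ℕ → Fin k) (n : ℕ) :
    ∫ ω, F (prependWord (fun i : Fin n => ω i) ω₀) ∂μ =
      ∑ v : Fin n → Fin k, μ.real (cyl (prependWord v ω₀) n) * F (prependWord v ω₀) := by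
  have hres : Measurable fun (ω : ℕ → Fin k) (i : Fin n) => ω i :=
    measurable_pi_lambda _ fun i => measurable_pi_apply (i : ℕ)
  have hpre (v : Fin n → Fin k) :
      (fun (ω : ℕ → Fin k) (i : Fin n) => ω i) ⁻¹' {v} = cyl (prependWord v ω₀) n := by
    ext ω
    simp only [Set.mem_preimage, Set.mem_singleton_iff, funext_iff, Fin.forall_iff, cyl,
      Set.mem_ofPred_eq]
    exact forall₂_congr fun i hi => by rw [prependWord_of_lt v ω₀ hi]
  rw [← integral_map (f := fun v : Fin n → Fin k => F (prependWord v ω₀)) hres.aemeasurable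
    (measurable_of_finite _).aestronglyMeasurable, integral_fintype (.of_finite)]
  exact Finset.sum_congr rfl fun v _ => by
    rw [map_measureReal_apply hres (measurableSet_singleton v), hpre, smul_eq_mul]

lemma ext_of_forall_lipschitz_integral_eq [BorelSpace X] {m₁ m₂ : Measure X}
    [hm₁ : IsProbabilityMeasure m₁] [hm₂ : IsProbabilityMeasure m₂]
    (heq : ∀ g : X → ℝ, (∃ B, ∀ x, |g x| ≤ B) → (∃ K, LipschitzWith K g) →
      ∫ x, g x ∂m₁ = ∫ x, g x ∂m₂) : m₁ = m₂ := by
  let P₁ : ProbabilityMeasure X := ⟨m₁, hm₁⟩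
  let P₂ : ProbabilityMeasure X := ⟨m₂, hm₂⟩
  have hlim : Tendsto (fun _ : ℕ => P₁) atTop (nhds P₂) := by
    refine tendsto_iff_forall_lipschitz_integral_tendsto.2 fun g ⟨B, hB⟩ hgL => ?_
    have x₀ : X := m₁.nonempty_of_neZero.some
    refine tendsto_const_nhds.congr fun _ => (heq g ⟨|g x₀| + B, fun x => ?_⟩ hgL).symm
    have hx : |g x - g x₀| ≤ B := hB x x₀
    linarith [abs_sub_abs_le_abs_sub (g x) (g x₀)]
  exact congrArg (fun m : ProbabilityMeasure X => (m : Measure X))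
    (tendsto_nhds_unique tendsto_const_nhds hlim)

namespace IsContractiveOnAverage

variable [BorelSpace X] {h : Fin k → X → X} {p : Fin k → X → ℝ} {s ρ C : ℝ}
  (H : IsContractiveOnAverage h p s ρ C)
include H

variable {ν : Measure X} [IsProbabilityMeasure ν]

lemma integrable_pIterRev (ω : ℕ → Fin k) (n : ℕ) : Integrable (pIterRev h p ω n) ν :=
  .of_bound (C := 1)
    (continuous_pIterRev H.continuous_map H.continuous_weight ω n).aestronglyMeasurable <|
    ae_of_all _ fun x => by
      rw [Real.norm_eq_abs, abs_of_nonneg (H.isProbWeight.pIterRev_nonneg ω n x)]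
      exact H.isProbWeight.pIterRev_le_one ω n x

variable {μ : Measure (ℕ → Fin k)} [IsProbabilityMeasure μ] {x₀ : X} {π : (ℕ → Fin k) → X}
  (hπ : IsBackwardCoding h p ν μ x₀ π)
include hπ

lemma integral_sum_pIterRev_mul (F : (ℕ → Fin k) → ℝ) (ω₀ : ℕ → Fin k) (n : ℕ) :
    ∫ x, ∑ v : Fin n → Fin k, pIterRev h p (prependWord v ω₀) n x * F (prependWord v ω₀) ∂ν =
      ∫ ω, F (prependWord (fun i : Fin n => ω i) ω₀) ∂μ := by
  rw [integral_prependWord_restrict, integral_finsetSum _ fun v _ =>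
    (H.integrable_pIterRev _ n).mul_const _]
  exact Finset.sum_congr rfl fun v _ => by rw [integral_mul_const, hπ.measureReal_cyl]

lemma tendsto_integral_sum_pIterRev_mul {B : ℝ} {G : (ℕ → Fin k) × X → ℝ} (hGc : Continuous G)
    (hGB : ∀ y, |G y| ≤ B) (ω₀ : ℕ → Fin k) :
    Tendsto (fun n => ∫ x, ∑ v : Fin n → Fin k, pIterRev h p (prependWord v ω₀) n x *
        G (prependWord v ω₀, hIterRev h (prependWord v ω₀) n x₀) ∂ν) atTop
      (nhds (∫ ω, G (ω, π ω) ∂μ)) := by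
  simp only [fun n => H.integral_sum_pIterRev_mul hπ (fun τ => G (τ, hIterRev h τ n x₀)) ω₀ n]
  refine tendsto_integral_of_dominated_convergence (fun _ => B) (fun n => ?_)
    (integrable_const _) (fun n => ae_of_all _ fun ω => hGB _) ?_
  · have hword : Measurable fun (ω : ℕ → Fin k) (i : Fin n) => ω i :=
      measurable_pi_lambda _ fun i => measurable_pi_apply (i : ℕ)
    exact ((measurable_of_finite fun v : Fin n → Fin k => G (prependWord v ω₀,
      hIterRev h (prependWord v ω₀) n x₀)).comp hword).aestronglyMeasurable
  · filter_upwards [hπ.ae_tendsto] with ω hω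
    refine (hGc.tendsto _).comp ((tendsto_prependWord_restrict ω ω₀).prodMk_nhds ?_)
    exact hω.congr fun n => dependsOn_hIterRev n x₀ fun i hi =>
      (prependWord_of_lt (fun i : Fin n => ω i) ω₀ hi).symm

lemma tendsto_integral_iterate_skewOp {B D : ℝ} {G : (ℕ → Fin k) × X → ℝ} (hGc : Continuous G)
    (hG : IsHolderTest s B D G) (ω₀ : ℕ → Fin k) :
    Tendsto (fun n => ∫ x, (skewOp h p)^[n] G (ω₀, x) ∂ν) atTop (nhds (∫ ω, G (ω, π ω) ∂μ)) := by
  set S : ℕ → X → ℝ := fun n x => ∑ v : Fin n → Fin k, pIterRev h p (prependWord v ω₀) n x *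
    G (prependWord v ω₀, hIterRev h (prependWord v ω₀) n x₀)
  have hL n : Continuous fun x => (skewOp h p)^[n] G (ω₀, x) :=
    (H.continuous_iterate_skewOp hGc n).comp (Continuous.prodMk_right ω₀)
  have hS n : Integrable (S n) ν :=
    integrable_finsetSum _ fun v _ => (H.integrable_pIterRev _ n).mul_const _
  have hle n x := H.abs_iterate_skewOp_sub_sum_le hG ω₀ n x x₀
  have hdiff : Tendsto (fun n => ∫ x, ((skewOp h p)^[n] G (ω₀, x) - S n x) ∂ν) atTop
      (nhds (∫ _, 0 ∂ν)) := by
    refine tendsto_integral_of_dominated_convergence (fun _ => 2 * B)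
      (fun n => (hL n).aestronglyMeasurable.sub (hS n).1) (integrable_const _)
      (fun n => ae_of_all _ fun x => (hle n x).trans (min_le_left _ _)) (ae_of_all _ fun x => ?_)
    exact squeeze_zero_norm (fun n => (hle n x).trans (min_le_right _ _))
      (H.tendsto_rate_pow_mul _)
  rw [integral_zero] at hdiff
  have hLint n : Integrable (fun x => (skewOp h p)^[n] G (ω₀, x)) ν :=
    .of_bound (hL n).aestronglyMeasurable B <| ae_of_all _ fun x =>
      (H.isProbWeight.comp Prod.snd).abs_iterate_markovOp_le hG.abs_le n (ω₀, x)
  rw [← add_zero (∫ ω, G (ω, π ω) ∂μ)]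
  refine ((H.tendsto_integral_sum_pIterRev_mul hπ hGc hG.abs_le ω₀).add hdiff).congr fun n => ?_
  rw [integral_sub (hLint n) (hS n), add_sub_cancel]

omit [IsProbabilityMeasure ν] [IsProbabilityMeasure μ] in
lemma aemeasurable_coding : AEMeasurable π μ :=
  aemeasurable_of_tendsto_metrizable_ae' (fun n => (measurable_hIterRev_left
    (fun j => (H.continuous_map j).measurable) n x₀).aemeasurable) hπ.ae_tendsto

lemma isStationaryMeasure_seqCons [Nonempty (ℕ → Fin k)] :
    IsStationaryMeasure_s9 seqCons (fun j ω => p j (π ω)) μ := by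
  have hq : IsProbWeight fun j ω => p j (π ω) := H.isProbWeight.comp π
  have hqm j : AEMeasurable (fun ω => p j (π ω)) μ :=
    (H.continuous_weight j).measurable.comp_aemeasurable (H.aemeasurable_coding hπ)
  have hcons j : Measurable (seqCons j : (ℕ → Fin k) → ℕ → Fin k) :=
    (continuous_seqCons j).measurable
  have := isFiniteMeasure_markovDual (H := seqCons) (m := μ) hq
  refine ⟨hcons, hqm, (ext_of_forall_integral_eq_of_IsFiniteMeasure fun f => ?_).symm⟩
  set G : (ℕ → Fin k) × X → ℝ := f ∘ Prod.fst
  have hGc : Continuous G := f.continuous.comp continuous_fst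
  obtain ⟨D, hD0, hD⟩ := H.exists_invariant_holderConst ‖f‖
  have hG : IsHolderTest s ‖f‖ D G := isHolderTest_comp_fst hD0 f.norm_coe_le_norm
  have ω₀ : ℕ → Fin k := Classical.arbitrary _
  have hlim := (tendsto_add_atTop_iff_nat 1).2 (H.tendsto_integral_iterate_skewOp hπ hGc hG ω₀)
  have hlim' := H.tendsto_integral_iterate_skewOp hπ (continuous_skewOp H.continuous_map
    H.continuous_weight hGc) (H.isHolderTest_skewOp hD hG) ω₀
  rw [(integrable_markovOp_and_integral_markovDual hq hcons hqm (f.integrable _)).2]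
  exact tendsto_nhds_unique hlim hlim'

lemma map_coding_eq [Nonempty (ℕ → Fin k)] (hν : IsStationaryMeasure_s9 h p ν) : μ.map π = ν := by
  have hπm := H.aemeasurable_coding hπ
  have : IsProbabilityMeasure (μ.map π) := Measure.isProbabilityMeasure_map hπm
  refine ext_of_forall_lipschitz_integral_eq fun g ⟨B, hB⟩ ⟨K, hK⟩ => ?_
  have hg : IsHolderTest (Ω := ℕ → Fin k) s B (max K (2 * B)) fun y => g y.2 :=
    ⟨K.2.trans (le_max_left _ _), fun y => hB y.2, fun _ x y => le_max_mul_rpow_of_exponent_le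
      dist_nonneg H.exponent_pos.le one_pos H.exponent_le_one K.2
      (by rw [Real.rpow_one]; exact hK.dist_le_mul x y)
      (by linarith [abs_sub (g x) (g y), hB x, hB y])⟩
  have ω₀ : ℕ → Fin k := Classical.arbitrary _
  have hiter n x : (skewOp h p)^[n] (g ∘ Prod.snd) (ω₀, x) = (markovOp h p)^[n] g x :=
    iterate_markovOp_comp (H := fun j => Prod.map (seqCons j) (h j)) (H' := h) (q' := p)
      (φ := Prod.snd) (fun j => Set.mapsTo_univ _ Set.univ) (fun _ _ _ => rfl)
      (fun _ _ => rfl) g n (Set.mem_univ (ω₀, x))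
  have hgint : Integrable g ν :=
    .of_bound hK.continuous.aestronglyMeasurable B (ae_of_all _ hB)
  have hlim := H.tendsto_integral_iterate_skewOp hπ (hK.continuous.comp continuous_snd) hg ω₀
  simp only [hiter, hν.integral_iterate_markovOp H.isProbWeight hgint] at hlim
  rw [integral_map hπm hK.continuous.aestronglyMeasurable]
  exact tendsto_nhds_unique hlim tendsto_const_nhds

omit [BorelSpace X] [IsProbabilityMeasure ν] [IsProbabilityMeasure μ] in
lemma ae_coding_eq_apply_coding_seqShift (hμ : MeasurePreserving seqShift μ μ) :
    ∀ᵐ ω ∂μ, π ω = h (ω 0) (π (seqShift ω)) := by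
  filter_upwards [hπ.ae_tendsto, hμ.quasiMeasurePreserving.ae hπ.ae_tendsto] with ω hω hσω
  refine tendsto_nhds_unique ((tendsto_add_atTop_iff_nat 1).2 hω) ?_
  simp only [hIterRev_succ_eq]
  exact ((H.continuous_map (ω 0)).tendsto _).comp hσω

end IsContractiveOnAverage

end Coding

section Ergodicity

variable {ι : Type*} [MeasurableSpace ι] {μ : Measure (ℕ → ι)} [IsFiniteMeasure μ]

lemma exists_dependsOn_indicator_eLpNorm_sub_le {E : Set (ℕ → ι)} (hE : MeasurableSet E) {ε : ℝ}
    (hε : 0 < ε) : ∃ (S : Set (ℕ → ι)) (n : ℕ), MeasurableSet S ∧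
      DependsOn (S.indicator fun _ => (1 : ℝ)) (Set.Iio n) ∧
      eLpNorm ((S.indicator fun _ => (1 : ℝ)) - E.indicator fun _ => 1) 1 μ ≤
        ENNReal.ofReal ε := by
  have hdense : μ.MeasureDense (measurableCylinders fun _ : ℕ => ι) :=
    .of_generateFrom_isSetAlgebra_finite μ isSetAlgebra_measurableCylinders
      generateFrom_measurableCylinders.symm
  obtain ⟨S, hS, hES⟩ := hdense.approx E hE (measure_ne_top μ E) ε hε
  obtain ⟨I, T, hT, rfl⟩ := (mem_measurableCylinders S).1 hS
  refine ⟨cylinder I T, I.sup id + 1, hT.cylinder I,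
    (dependsOn_cylinder_indicator_const (α := fun _ => ι) T 1).mono fun i hi => Finset.mem_range.1
      (Finset.subset_range_sup_succ I hi), ?_⟩
  rw [eLpNorm_sub_comm, eLpNorm_indicator_sub_indicator,
    eLpNorm_indicator_const (hE.symmDiff (hT.cylinder I)) one_ne_zero one_ne_top]
  simpa using hES.le

lemma exists_tendsto_iterate_markovOp_seqCons [Fintype ι] {q : ι → (ℕ → ι) → ℝ}
    (hq : IsProbWeight q) (hμ : IsStationaryMeasure_s9 seqCons q μ) {E : Set (ℕ → ι)}
    (hE : MeasurableSet E) (hinv : seqShift ⁻¹' E = E) :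
    ∃ (S : ℕ → Set (ℕ → ι)) (N : ℕ → ℕ),
      (∀ i, DependsOn ((S i).indicator fun _ => (1 : ℝ)) (Set.Iio (N i))) ∧
      ∀ᵐ ω ∂μ, Tendsto (fun i => (markovOp seqCons q)^[N i] ((S i).indicator fun _ => 1) ω) atTop
        (nhds (E.indicator (fun _ => 1) ω)) := by
  have hint {S : Set (ℕ → ι)} (hS : MeasurableSet S) :
      Integrable (S.indicator fun _ => (1 : ℝ)) μ := (integrable_const 1).indicator hS
  have hEinv j ω : E.indicator (fun _ => (1 : ℝ)) (seqCons j ω) = E.indicator (fun _ => 1) ω :=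
    Set.indicator_const_eq_indicator_const (Set.ext_iff.1 hinv (seqCons j ω)).symm
  choose S N hS hSN hSE using fun i : ℕ => exists_dependsOn_indicator_eLpNorm_sub_le (μ := μ) hE
    (Nat.one_div_pos_of_nat (α := ℝ) (n := i))
  set F := fun i => (markovOp seqCons q)^[N i] ((S i).indicator fun _ => 1)
  have hle i : eLpNorm (F i - E.indicator fun _ => 1) 1 μ ≤ ENNReal.ofReal (1 / (i + 1)) := by
    rw [hq.iterate_markovOp_sub hEinv]
    exact (hμ.eLpNorm_one_iterate_markovOp_le hq ((hint (hS i)).sub (hint hE)) _).trans (hSE i)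
  have hlim : Tendsto (fun i => eLpNorm (F i - E.indicator fun _ => 1) 1 μ) atTop (nhds 0) :=
    tendsto_of_tendsto_of_tendsto_of_le_of_le tendsto_const_nhds
      (ENNReal.ofReal_zero ▸ ENNReal.tendsto_ofReal tendsto_one_div_add_atTop_nhds_zero_nat)
      (fun _ => zero_le) hle
  obtain ⟨ns, -, hns⟩ := (tendstoInMeasure_of_tendsto_eLpNorm one_ne_zero
    (fun i => (hμ.integrable_iterate_markovOp hq (hint (hS i)) (N i)).1) (hint hE).1
    hlim).exists_seq_tendsto_ae
  exact ⟨S ∘ ns, N ∘ ns, fun i => hSN (ns i), hns⟩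

namespace IsContractiveOnAverage

variable {X : Type*} [MetricSpace X] {h : Fin k → X → X} {p : Fin k → X → ℝ} {s ρ C : ℝ}
  (H : IsContractiveOnAverage h p s ρ C)
include H

lemma eq_of_abs_sub_le_dist_rpow {Y : Type*} {T : Fin k → Y → Y} {φ : Y → X} {A : Set Y}
    (hA : ∀ j, Set.MapsTo (T j) A A) (hφ : ∀ y ∈ A, ∀ j, φ (T j y) = h j (φ y))
    {f : Y → ℝ} (hf : ∀ j y, f (T j y) = f y) {D : ℝ} (hD : 0 ≤ D)
    (hfD : ∀ y ∈ A, ∀ y' ∈ A, |f y - f y'| ≤ D * dist (φ y) (φ y') ^ s) :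
    ∀ y ∈ A, ∀ y' ∈ A, f y = f y' := by
  have hpow (n : ℕ) : ∀ y ∈ A, ∀ y' ∈ A, |f y - f y'| ≤ ρ ^ n * (D * dist (φ y) (φ y') ^ s) := by
    induction n with
    | zero => simpa using hfD
    | succ n ih =>
      intro y hy y' hy'
      have havg : f y - f y' = ∑ j, p j (φ y) * (f (T j y) - f (T j y')) := by
        simp only [hf, ← Finset.sum_mul, H.isProbWeight.sum_eq_one, one_mul]
      calc |f y - f y'|
        _ ≤ ∑ j, p j (φ y) * (ρ ^ n * (D * dist (h j (φ y)) (h j (φ y')) ^ s)) := by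
            rw [havg]
            exact abs_sum_mul_le_sum_mul (fun j => H.isProbWeight.nonneg j _) fun j => by
              simpa only [hφ _ hy, hφ _ hy'] using ih _ (hA j hy) _ (hA j hy')
        _ = ρ ^ n * D * ∑ j, p j (φ y) * dist (h j (φ y)) (h j (φ y')) ^ s := by
            rw [Finset.mul_sum]; exact Finset.sum_congr rfl fun j _ => by ring
        _ ≤ ρ ^ n * D * (ρ * dist (φ y) (φ y') ^ s) := mul_le_mul_of_nonneg_left
            (H.sum_mul_dist_rpow_le _ _) (mul_nonneg (pow_nonneg H.rate_nonneg n) hD)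
        _ = ρ ^ (n + 1) * (D * dist (φ y) (φ y') ^ s) := by ring
  intro y hy y' hy'
  refine sub_eq_zero.1 (abs_eq_zero.1 (le_antisymm ?_ (abs_nonneg _)))
  exact ge_of_tendsto' (H.tendsto_rate_pow_mul _) fun n => hpow n y hy y' hy'

lemma abs_iterate_markovOp_seqCons_sub_le {π : (ℕ → Fin k) → X} {A : Set (ℕ → Fin k)}
    (hA : ∀ j, Set.MapsTo (seqCons j) A A) (hπ : ∀ ω ∈ A, ∀ j, π (seqCons j ω) = h j (π ω))
    {B D : ℝ} (hD : 0 ≤ D) (hBD : k * C * B + ρ * D ≤ D) {F : (ℕ → Fin k) → ℝ} {n : ℕ}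
    (hF : DependsOn F (Set.Iio n)) (hFB : ∀ ω, |F ω| ≤ B) {ω τ : ℕ → Fin k} (hω : ω ∈ A)
    (hτ : τ ∈ A) :
    |(markovOp seqCons fun j ω => p j (π ω))^[n] F ω -
      (markovOp seqCons fun j ω => p j (π ω))^[n] F τ| ≤ D * dist (π ω) (π τ) ^ s := by
  have hG : IsHolderTest s B D (F ∘ (Prod.fst : (ℕ → Fin k) × X → ℕ → Fin k)) :=
    isHolderTest_comp_fst hD hFB
  have hlift {ω : ℕ → Fin k} (hω : ω ∈ A) :
      (markovOp seqCons fun j ω => p j (π ω))^[n] F ω = (skewOp h p)^[n] (F ∘ Prod.fst) (ω, π ω) :=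
    iterate_markovOp_comp (φ := fun ω => (ω, π ω))
      (H' := fun j => Prod.map (seqCons j) (h j)) (q' := fun j y => p j y.2) hA
      (fun ω hω j => Prod.ext rfl (hπ ω hω j)) (fun _ _ => rfl) (F ∘ Prod.fst) n hω
  rw [hlift hω, hlift hτ, iterate_skewOp_eq_of_dependsOn (fun _ => hF) ω τ]
  exact (H.isHolderTest_iterate_skewOp hBD hG n).abs_sub_le τ (π ω) (π τ)

variable [MeasurableSpace X] [BorelSpace X] {ν : Measure X} [IsProbabilityMeasure ν]
  {μ : Measure (ℕ → Fin k)} [IsProbabilityMeasure μ] {x₀ : X} {π : (ℕ → Fin k) → X}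
  (hπ : IsBackwardCoding h p ν μ x₀ π)
include hπ

lemma ae_coding_seqCons_eq (hμ : MeasurePreserving seqShift μ μ) :
    ∀ᵐ ω ∂μ, ∀ j, π (seqCons j ω) = h j (π ω) :=
  have : Nonempty (ℕ → Fin k) := μ.nonempty_of_neZero
  ae_all_iff.2 fun j => ((H.isStationaryMeasure_seqCons hπ).quasiMeasurePreserving
    (H.isProbWeight.comp π) j).ae (H.ae_coding_eq_apply_coding_seqShift hπ hμ)

lemma ergodic_seqShift (hμ : MeasurePreserving seqShift μ μ) : Ergodic seqShift μ := by
  refine ⟨hμ, ⟨fun E hE hinv => ?_⟩⟩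
  have : Nonempty (ℕ → Fin k) := μ.nonempty_of_neZero
  have hq : IsProbWeight fun j ω => p j (π ω) := H.isProbWeight.comp π
  have hm := H.isStationaryMeasure_seqCons hπ
  obtain ⟨S, N, hSN, hlim⟩ := exists_tendsto_iterate_markovOp_seqCons hq hm hE hinv
  obtain ⟨A, hAae, hA, hAlim⟩ := exists_forwardInvariant_of_ae (hm.quasiMeasurePreserving hq)
    (hlim.and (H.ae_coding_seqCons_eq hπ hμ))
  have hAπ := fun ω hω => (hAlim ω hω).2
  obtain ⟨D, hD, hBD⟩ := H.exists_invariant_holderConst 1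
  have hS i ω : |(S i).indicator (fun _ => (1 : ℝ)) ω| ≤ 1 := by
    rw [← Real.norm_eq_abs]; exact (norm_indicator_le_norm_self _ _).trans_eq norm_one
  have hconst := H.eq_of_abs_sub_le_dist_rpow hA hAπ
    (fun j ω => Set.indicator_const_eq_indicator_const (Set.ext_iff.1 hinv (seqCons j ω)).symm) hD
    fun ω hω τ hτ => le_of_tendsto' ((hAlim ω hω).1.sub (hAlim τ hτ).1).abs fun i =>
      H.abs_iterate_markovOp_seqCons_sub_le hA hAπ hD hBD (hSN i) (hS i) hω hτ
  rw [Filter.eventuallyConst_set]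
  obtain ⟨τ, hτ⟩ := hAae.exists
  by_cases hτE : τ ∈ E
  · exact .inl (hAae.mono fun ω hω => by simpa [hτE] using hconst ω hω τ hτ)
  · exact .inr (hAae.mono fun ω hω => by simpa [hτE] using hconst ω hω τ hτ)

end IsContractiveOnAverage

end Ergodicity

section BirkhoffSums

variable {Ω : Type*} {T : Ω → Ω} {f : Ω → ℝ}

lemma partialSups_birkhoffSum_succ (n : ℕ) (ω : Ω) :
    partialSups (birkhoffSum T f) (n + 1) ω =
      max 0 (f ω + partialSups (birkhoffSum T f) n (T ω)) := by
  have hsucc : (fun i => birkhoffSum T f i ω) ∘ Order.succ =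
      fun i => f ω + birkhoffSum T f i (T ω) := funext fun i => birkhoffSum_succ' T f i ω
  rw [Pi.partialSups_apply, Pi.partialSups_apply, ← Order.succ_eq_add_one, partialSups_succ', hsucc,
    partialSups_const_add]
  rfl

lemma bddAbove_range_birkhoffSum_apply_iff (ω : Ω) :
    BddAbove (Set.range fun n => birkhoffSum T f n (T ω)) ↔
      BddAbove (Set.range fun n => birkhoffSum T f n ω) := by
  simp only [bddAbove_def, Set.forall_mem_range]
  constructor
  · rintro ⟨M, hM⟩
    refine ⟨max 0 (f ω + M), fun n => ?_⟩
    rcases n with _ | n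
    · exact le_max_left _ _
    · rw [birkhoffSum_succ']
      exact (add_le_add_right (hM n) _).trans (le_max_right _ _)
  · rintro ⟨M, hM⟩
    exact ⟨M - f ω, fun n => le_sub_iff_add_le'.2 (birkhoffSum_succ' T f n ω ▸ hM (n + 1))⟩

lemma abs_partialSups_birkhoffSum_succ_sub_le (n : ℕ) (ω : Ω) :
    |partialSups (birkhoffSum T f) (n + 1) ω - partialSups (birkhoffSum T f) n (T ω)| ≤ |f ω| := by
  have hnonneg : 0 ≤ partialSups (birkhoffSum T f) n (T ω) :=
    le_partialSups_of_le (birkhoffSum T f) n.zero_le (T ω)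
  rw [partialSups_birkhoffSum_succ, abs_le]
  constructor
  · linarith [neg_abs_le (f ω), le_max_right 0 (f ω + partialSups (birkhoffSum T f) n (T ω))]
  · exact sub_le_iff_le_add.2 (max_le (by positivity) (by linarith [le_abs_self (f ω)]))

lemma tendsto_partialSups_birkhoffSum_succ_sub {ω : Ω}
    (hω : ¬BddAbove (Set.range fun n => birkhoffSum T f n ω)) :
    Tendsto (fun n => partialSups (birkhoffSum T f) (n + 1) ω -
      partialSups (birkhoffSum T f) n (T ω)) atTop (nhds (f ω)) := by
  rw [← bddAbove_range_birkhoffSum_apply_iff, not_bddAbove_iff] at hω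
  obtain ⟨_, ⟨N, rfl⟩, hN⟩ := hω (-f ω)
  refine tendsto_const_nhds.congr' ?_
  filter_upwards [eventually_ge_atTop N] with n hn
  have hle := le_partialSups_of_le (birkhoffSum T f) hn (T ω)
  rw [partialSups_birkhoffSum_succ, max_eq_right (by linarith), add_sub_cancel_right]

variable [MeasurableSpace Ω] {μ : Measure Ω}

lemma integrable_birkhoffSum (hT : MeasurePreserving T μ μ) (hf : Integrable f μ) (n : ℕ) :
    Integrable (birkhoffSum T f n) μ :=
  integrable_finsetSum _ fun i _ => (hT.iterate i).integrable_comp_of_integrable hf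

lemma integrable_partialSups_birkhoffSum (hT : MeasurePreserving T μ μ) (hf : Integrable f μ)
    (n : ℕ) : Integrable (partialSups (birkhoffSum T f) n) μ := by
  induction n with
  | zero => exact integrable_birkhoffSum hT hf 0
  | succ n ih => rw [partialSups_add_one]; exact ih.sup (integrable_birkhoffSum hT hf _)

-- `∫ N_{n+1} - N_n ∘ T ≥ 0` for the running maxima `N_n`, and the integrand tends to `f` wherever
-- `N_n` diverges.
lemma integral_nonneg_of_ae_not_bddAbove_birkhoffSum (hT : MeasurePreserving T μ μ)
    (hf : Integrable f μ)
    (hunbdd : ∀ᵐ ω ∂μ, ¬BddAbove (Set.range fun n => birkhoffSum T f n ω)) :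
    0 ≤ ∫ ω, f ω ∂μ := by
  have hint := integrable_partialSups_birkhoffSum hT hf
  have hintT n := hT.integrable_comp_of_integrable (hint n)
  refine ge_of_tendsto' (tendsto_integral_of_dominated_convergence (fun ω => |f ω|)
    (fun n => ((hint (n + 1)).sub (hintT n)).1) hf.abs
    (fun n => ae_of_all _ (abs_partialSups_birkhoffSum_succ_sub_le n))
    (hunbdd.mono fun _ => tendsto_partialSups_birkhoffSum_succ_sub)) fun n => ?_
  have hcomp : ∫ ω, partialSups (birkhoffSum T f) n (T ω) ∂μ =
      ∫ ω, partialSups (birkhoffSum T f) n ω ∂μ := by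
    rw [← integral_map hT.aemeasurable (hT.map_eq.symm ▸ (hint n).1), hT.map_eq]
  refine (sub_nonneg.2 ?_).trans_eq (integral_sub (hint (n + 1)) (hintT n)).symm
  exact hcomp.trans_le (integral_mono (hint n) (hint (n + 1))
    ((partialSups (birkhoffSum T f)).monotone n.le_succ))

lemma ae_bddAbove_birkhoffSum (hT : Ergodic T μ) (hf : Integrable f μ)
    (hneg : ∫ ω, f ω ∂μ < 0) : ∀ᵐ ω ∂μ, BddAbove (Set.range fun n => birkhoffSum T f n ω) := by
  have hmeas : NullMeasurableSet {ω | BddAbove (Set.range fun n => birkhoffSum T f n ω)} μ :=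
    measurableSet_bddAbove_range (δ := NullMeasurableSpace Ω μ) fun n =>
      (integrable_birkhoffSum hT.toMeasurePreserving hf n).1.aemeasurable.nullMeasurable
  refine (hT.quasiErgodic.ae_mem_or_ae_notMem₀ hmeas (ae_of_all _ fun ω =>
    propext (bddAbove_range_birkhoffSum_apply_iff ω))).resolve_right fun hunbdd => ?_
  exact hneg.not_ge
    (integral_nonneg_of_ae_not_bddAbove_birkhoffSum hT.toMeasurePreserving hf hunbdd)

lemma ae_exists_birkhoffSum_le [IsProbabilityMeasure μ] (hT : Ergodic T μ)
    (hf : Integrable f μ) {c : ℝ} (hc : ∫ ω, f ω ∂μ < c) :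
    ∀ᵐ ω ∂μ, ∃ M, ∀ n : ℕ, birkhoffSum T f n ω ≤ n * c + M := by
  have hneg : ∫ ω, (f ω - c) ∂μ < 0 := by
    rw [integral_sub hf (integrable_const c)]
    simpa using hc
  filter_upwards [ae_bddAbove_birkhoffSum hT (hf.sub (integrable_const c)) hneg] with ω ⟨M, hM⟩
  refine ⟨M, fun n => sub_le_iff_le_add'.1 ?_⟩
  simpa [birkhoffSum] using hM ⟨n, rfl⟩

lemma ae_exists_exp_birkhoffSum_mem_Icc [IsProbabilityMeasure μ] (hT : Ergodic T μ)
    (hf : Integrable f μ) {a b : ℝ} (ha : a < ∫ ω, f ω ∂μ) (hb : ∫ ω, f ω ∂μ < b) :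
    ∀ᵐ ω ∂μ, ∃ K > (0 : ℝ), ∀ n : ℕ, Real.exp (birkhoffSum T f n ω) ∈
      Set.Icc (K⁻¹ * Real.exp (n * a)) (K * Real.exp (n * b)) := by
  filter_upwards [ae_exists_birkhoffSum_le hT hf hb,
    ae_exists_birkhoffSum_le hT hf.neg ((integral_neg f).trans_lt (neg_lt_neg ha))]
    with ω ⟨M, hM⟩ ⟨M', hM'⟩
  refine ⟨Real.exp (max M M'), Real.exp_pos _, fun n => ?_⟩
  have hneg : birkhoffSum T (-f) n ω = -birkhoffSum T f n ω := birkhoffSum_neg T f n ω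
  rw [← Real.exp_neg, ← Real.exp_add, ← Real.exp_add, Set.mem_Icc, Real.exp_le_exp,
    Real.exp_le_exp]
  constructor
  · linarith [hneg ▸ hM' n, le_max_right M M']
  · linarith [hM n, le_max_left M M']

end BirkhoffSums

section Observable

lemma zIterRev_eq_birkhoffSum {X : Type*} {h : Fin k → X → X} (z : Fin k → X → ℝ)
    {π : (ℕ → Fin k) → X} {ω : ℕ → Fin k}
    (hπ : ∀ i, π (fun j => ω (j + i)) = h (ω i) (π fun j => ω (j + (i + 1)))) (n : ℕ) :
    zIterRev h z ω n (π fun i => ω (i + n)) =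
      birkhoffSum seqShift (fun ω => z (ω 0) (π (seqShift ω))) n ω := by
  induction n with
  | zero => rfl
  | succ n ih =>
    rw [birkhoffSum_succ, ← ih, hπ n, ← Function.iterate_succ_apply' seqShift, iterate_seqShift,
      iterate_seqShift]
    simpa only [zIterRev, zero_add] using add_comm _ _

namespace IsContractiveOnAverage

variable {X : Type*} [MetricSpace X] [MeasurableSpace X] [BorelSpace X] {h : Fin k → X → X}
  {p : Fin k → X → ℝ} {s ρ C : ℝ} (H : IsContractiveOnAverage h p s ρ C)
  {ν : Measure X} [IsProbabilityMeasure ν] {μ : Measure (ℕ → Fin k)} [IsProbabilityMeasure μ]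
  {x₀ : X} {π : (ℕ → Fin k) → X} (hπ : IsBackwardCoding h p ν μ x₀ π)
  (hν : IsStationaryMeasure_s9 h p ν) (hμ : MeasurePreserving seqShift μ μ)
  {z : Fin k → X → ℝ} (hz : ∀ j, Integrable (z j) ν)
include H hπ hν hμ hz

lemma integrable_observable :
    Integrable (fun ω : ℕ → Fin k => z (ω 0) (π (seqShift ω))) μ := by
  have : Nonempty (ℕ → Fin k) := μ.nonempty_of_neZero
  have hsum : (fun ω : ℕ → Fin k => z (ω 0) (π (seqShift ω))) = fun ω =>
      ∑ j, {ω : ℕ → Fin k | ω 0 = j}.indicator (fun ω => z j (π (seqShift ω))) ω := by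
    ext ω
    simp [Set.indicator_apply]
  rw [hsum]
  refine integrable_finsetSum _ fun j _ => Integrable.indicator ?_
    (measurableSet_eq_fun (measurable_pi_apply 0) measurable_const)
  refine hμ.integrable_comp_of_integrable (g := z j ∘ π) ?_
  exact (H.map_coding_eq hπ hν ▸ hz j).comp_aemeasurable (H.aemeasurable_coding hπ)

lemma integral_observable :
    ∫ ω, z (ω 0) (π (seqShift ω)) ∂μ = ∫ x, ∑ j, p j x * z j x ∂ν := by
  have : Nonempty (ℕ → Fin k) := μ.nonempty_of_neZero
  have hmeas : AEStronglyMeasurable (fun x => ∑ j, p j x * z j x) ν :=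
    Finset.aestronglyMeasurable_fun_sum _ fun j _ =>
      (H.continuous_weight j).aestronglyMeasurable.mul (hz j).1
  calc ∫ ω, z (ω 0) (π (seqShift ω)) ∂μ
    _ = ∫ ω, ∑ j, p j (π ω) * z j (π ω) ∂μ :=
        ((H.isStationaryMeasure_seqCons hπ).integral_markovOp (H.isProbWeight.comp π)
          (H.integrable_observable hπ hν hμ hz)).symm
    _ = ∫ x, ∑ j, p j x * z j x ∂ν := by
        have hmap := H.map_coding_eq hπ hν
        rw [← hmap] at hmeas ⊢
        exact (integral_map (H.aemeasurable_coding hπ) hmeas).symm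

lemma ae_exists_exp_zIterRev_mem_Icc {a b : ℝ} (ha : a < ∫ x, ∑ j, p j x * z j x ∂ν)
    (hb : ∫ x, ∑ j, p j x * z j x ∂ν < b) :
    ∀ᵐ ω ∂μ, ∃ K > (0 : ℝ), ∀ n : ℕ, Real.exp (zIterRev h z ω n (π fun i => ω (i + n))) ∈
      Set.Icc (K⁻¹ * Real.exp (n * a)) (K * Real.exp (n * b)) := by
  rw [← H.integral_observable hπ hν hμ hz] at ha hb
  have hshift : ∀ᵐ ω ∂μ, ∀ i,
      π (fun j => ω (j + i)) = h (ω i) (π fun j => ω (j + (i + 1))) := by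
    refine ae_all_iff.2 fun i => ((hμ.iterate i).quasiMeasurePreserving.ae
      (H.ae_coding_eq_apply_coding_seqShift hπ hμ)).mono fun ω hω => ?_
    rw [← Function.iterate_succ_apply' seqShift, iterate_seqShift, iterate_seqShift] at hω
    simpa only [zero_add] using hω
  filter_upwards [hshift, ae_exists_exp_birkhoffSum_mem_Icc (H.ergodic_seqShift hπ hμ)
    (H.integrable_observable hπ hν hμ hz) ha hb] with ω hω hbound
  simpa only [zIterRev_eq_birkhoffSum z hω] using hbound

end IsContractiveOnAverage

end Observable

section ContractionExponent

variable {ι : Type*} [Fintype ι] {w r u : ι → ℝ} {δ M b Q s : ℝ}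

-- `Real.log 0 = 0`, so the hypothesis on `∑ w log r` says nothing about the vanishing `r j`.
-- Truncating the ratios at `exp (-Q)` makes up for this: a single truncated term, of weight at
-- least `δ`, already brings the average below `-b`.
lemma exists_truncated_log (hw : ∀ j, δ ≤ w j) (hδ : 0 < δ) (hsum : ∑ j, w j = 1) (hM : 0 ≤ M)
    (hMQ : M ≤ Q) (hbQ : M + b ≤ δ * Q) (hrM : ∀ j, r j ≤ Real.exp M)
    (hlog : ∑ j, w j * Real.log (r j) ≤ -b) :
    ∃ u : ι → ℝ, (∀ j, r j ≤ Real.exp (u j)) ∧ (∀ j, |u j| ≤ Q) ∧ ∑ j, w j * u j ≤ -b := by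
  have hpos j : 0 < max (r j) (Real.exp (-Q)) := lt_max_of_lt_right (Real.exp_pos _)
  set u : ι → ℝ := fun j => Real.log (max (r j) (Real.exp (-Q))) with hu
  have hexp j : Real.exp (u j) = max (r j) (Real.exp (-Q)) := Real.exp_log (hpos j)
  have hQu j : -Q ≤ u j := Real.exp_le_exp.1 ((le_max_right _ _).trans_eq (hexp j).symm)
  have huM j : u j ≤ M := Real.exp_le_exp.1 <| (hexp j).trans_le <|
    max_le (hrM j) (Real.exp_le_exp.2 (by linarith))
  refine ⟨u, fun j => (le_max_left _ _).trans_eq (hexp j).symm,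
    fun j => abs_le.2 ⟨hQu j, (huM j).trans hMQ⟩, ?_⟩
  by_cases htrunc : ∃ j, r j ≤ Real.exp (-Q)
  · obtain ⟨i, hi⟩ := htrunc
    have hui : u i = -Q := by rw [hu]; simp only [max_eq_right hi, Real.log_exp]
    have hsingle : w i * (M - u i) ≤ ∑ j, w j * (M - u j) :=
      Finset.single_le_sum (f := fun j => w j * (M - u j))
        (fun j _ => mul_nonneg (hδ.le.trans (hw j)) (sub_nonneg.2 (huM j))) (Finset.mem_univ i)
    simp only [mul_sub, Finset.sum_sub_distrib, ← Finset.sum_mul, hsum, one_mul, hui] at hsingle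
    nlinarith [mul_le_mul_of_nonneg_right (hw i) (hM.trans hMQ), mul_nonneg (hδ.le.trans (hw i)) hM]
  · push Not at htrunc
    simpa only [hu, fun j => max_eq_left (htrunc j).le] using hlog

lemma sum_mul_rpow_le (hw : ∀ j, 0 ≤ w j) (hsum : ∑ j, w j = 1) (hr : ∀ j, 0 ≤ r j)
    (hru : ∀ j, r j ≤ Real.exp (u j)) (huQ : ∀ j, |u j| ≤ Q) (hs : 0 ≤ s) (hsQ : s * Q ≤ 1) :
    ∑ j, w j * r j ^ s ≤ 1 + s * ∑ j, w j * u j + (s * Q) ^ 2 := by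
  have hterm j : r j ^ s ≤ 1 + s * u j + (s * Q) ^ 2 := by
    have hsu : |s * u j| ≤ s * Q := by
      rw [abs_mul, abs_of_nonneg hs]; exact mul_le_mul_of_nonneg_left (huQ j) hs
    have hrs : r j ^ s ≤ Real.exp (s * u j) := by
      rw [mul_comm, Real.exp_mul]; exact Real.rpow_le_rpow (hr j) (hru j) hs
    have hexp := le_of_abs_le (Real.abs_exp_sub_one_sub_id_le (hsu.trans hsQ))
    linarith [sq_le_sq' (abs_le.1 hsu).1 (abs_le.1 hsu).2]
  calc ∑ j, w j * r j ^ s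
    _ ≤ ∑ j, w j * (1 + s * u j + (s * Q) ^ 2) :=
        Finset.sum_le_sum fun j _ => mul_le_mul_of_nonneg_left (hterm j) (hw j)
    _ = (∑ j, w j) + s * ∑ j, w j * u j + (∑ j, w j) * (s * Q) ^ 2 := by
        rw [Finset.mul_sum, Finset.sum_mul, ← Finset.sum_add_distrib, ← Finset.sum_add_distrib]
        exact Finset.sum_congr rfl fun j _ => by ring
    _ = 1 + s * ∑ j, w j * u j + (s * Q) ^ 2 := by rw [hsum, one_mul]

lemma exists_exponent_sum_mul_rpow_le {α : ℝ} (hα : 0 < α) (hδ : 0 < δ) (hM : 0 ≤ M)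
    (hb : 0 < b) : ∃ s ρ : ℝ, 0 < s ∧ s ≤ α ∧ 0 ≤ ρ ∧ ρ < 1 ∧ ∀ w r : ι → ℝ, (∀ j, δ ≤ w j) →
      ∑ j, w j = 1 → (∀ j, 0 ≤ r j) → (∀ j, r j ≤ Real.exp M) →
        ∑ j, w j * Real.log (r j) ≤ -b → ∑ j, w j * r j ^ s ≤ ρ := by
  obtain ⟨Q, hQ, hMQ, hbQ⟩ : ∃ Q, 0 < Q ∧ M ≤ Q ∧ M + b ≤ δ * Q :=
    ⟨M + (M + b) / δ, by positivity, le_add_of_nonneg_right (by positivity), by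
      rw [mul_add, mul_div_cancel₀ _ hδ.ne']; exact le_add_of_nonneg_left (by positivity)⟩
  obtain ⟨s, hs, hsα, hsQ, hsb⟩ : ∃ s, 0 < s ∧ s ≤ α ∧ s * Q ≤ 1 ∧ s * Q ^ 2 ≤ b / 2 :=
    ⟨min α (min (1 / Q) (b / 2 / Q ^ 2)), by positivity, min_le_left _ _,
      (le_div_iff₀ hQ).1 ((min_le_right _ _).trans (min_le_left _ _)),
      (le_div_iff₀ (by positivity)).1 ((min_le_right _ _).trans (min_le_right _ _))⟩
  refine ⟨s, max 0 (1 - s * (b / 2)), hs, hsα, le_max_left _ _,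
    max_lt one_pos (sub_lt_self _ (by positivity)), fun w r hw hsum hr hrM hlog => ?_⟩
  obtain ⟨u, hru, huQ, hub⟩ := exists_truncated_log hw hδ hsum hM hMQ hbQ hrM hlog
  refine le_max_of_le_right ?_
  calc ∑ j, w j * r j ^ s
    _ ≤ 1 + s * ∑ j, w j * u j + (s * Q) ^ 2 :=
        sum_mul_rpow_le (fun j => hδ.le.trans (hw j)) hsum hr hru huQ hs.le hsQ
    _ = 1 + s * (∑ j, w j * u j + s * Q ^ 2) := by ring
    _ ≤ 1 + s * (-b + b / 2) := by gcongr
    _ = 1 - s * (b / 2) := by ring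

variable {X : Type*} [MetricSpace X] {h : Fin k → X → X} {p : Fin k → X → ℝ}

lemma exists_isContractiveOnAverage {K α : ℝ≥0} (hα : 0 < α) (hlip : ∀ j, LipschitzWith K (h j))
    (hpholder : ∀ j, ∃ C : ℝ≥0, HolderWith C α (p j)) (hδ : 0 < δ) (hpδ : ∀ j x, δ ≤ p j x)
    (hpsum : ∀ x, ∑ j, p j x = 1) (hb : 0 < b) (hcoa : ∀ x y, x ≠ y →
      ∑ j, p j x * Real.log (dist (h j x) (h j y) / dist x y) < -b) :
    ∃ s ρ C : ℝ, IsContractiveOnAverage h p s ρ C := by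
  have hp : IsProbWeight p := ⟨fun j x => hδ.trans_le (hpδ j x), hpsum⟩
  choose C hC using hpholder
  obtain ⟨s, ρ, hs, hsα, hρ0, hρ1, hrpow⟩ := exists_exponent_sum_mul_rpow_le (ι := Fin k)
    (α := min α 1) (M := K) (lt_min (NNReal.coe_pos.2 hα) one_pos) hδ K.coe_nonneg hb
  refine ⟨s, ρ, max (∑ j, (C j : ℝ)) 1, hp, fun j => (hlip j).continuous, hs,
    hsα.trans (min_le_right _ _), hρ0, hρ1, le_max_of_le_right zero_le_one,
    fun j x y => ?_, fun x y => ?_⟩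
  · refine le_max_mul_rpow_of_exponent_le dist_nonneg hs.le (NNReal.coe_pos.2 hα)
      (hsα.trans (min_le_left _ _)) (by positivity) ?_
      (abs_sub_le_of_nonneg_of_le (hp.nonneg j x) (hp.le_one j x) (hp.nonneg j y) (hp.le_one j y))
    refine ((hC j).dist_le x y).trans (mul_le_mul_of_nonneg_right ?_ (by positivity))
    exact Finset.single_le_sum (f := fun j => (C j : ℝ)) (fun j _ => (C j).2) (Finset.mem_univ j)
  · rcases eq_or_ne x y with rfl | hxy
    · simp [Real.zero_rpow hs.ne']
    have hd : 0 < dist x y := dist_pos.2 hxy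
    calc ∑ j, p j x * dist (h j x) (h j y) ^ s
      _ = (∑ j, p j x * (dist (h j x) (h j y) / dist x y) ^ s) * dist x y ^ s := by
          rw [Finset.sum_mul]
          refine Finset.sum_congr rfl fun j _ => ?_
          rw [mul_assoc, ← Real.mul_rpow (by positivity) hd.le, div_mul_cancel₀ _ hd.ne']
      _ ≤ ρ * dist x y ^ s := by
          refine mul_le_mul_of_nonneg_right (hrpow _ _ (hpδ · x) (hpsum x)
            (fun j => by positivity) (fun j => ?_) (hcoa x y hxy).le) (by positivity)
          exact ((div_le_iff₀ hd).2 ((hlip j).dist_le_mul x y)).trans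
            (by linarith [Real.add_one_le_exp (K : ℝ)])

end ContractionExponent

lemma lipschitzWith_of_log_norm_fderiv_le {E F : Type*} [NormedAddCommGroup E] [NormedSpace ℝ E]
    [NormedAddCommGroup F] [NormedSpace ℝ F] {f : E → F} {M : ℝ} (hf : Differentiable ℝ f)
    (hM : ∀ x, Real.log ‖fderiv ℝ f x‖ ≤ M) : LipschitzWith (Real.exp M).toNNReal f :=
  lipschitzWith_of_nnnorm_fderiv_le hf fun x => NNReal.le_toNNReal_of_coe_le <|
    (Real.le_exp_log _).trans (Real.exp_le_exp.2 (hM x))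

lemma IsContractiveOnAverage.isBackwardCoding {X : Type*} [MetricSpace X] [MeasurableSpace X]
    [BorelSpace X] {h : Fin k → X → X} {p : Fin k → X → ℝ} {s ρ C : ℝ}
    (H : IsContractiveOnAverage h p s ρ C) {ν : Measure X} {P : X → Measure (ℕ → Fin k)}
    (hP : ∀ x ω n, P x (cyl ω n) = ENNReal.ofReal (pIter h p ω n x)) {μ : Measure (ℕ → Fin k)}
    (hμ : ∀ ω n, μ (cyl ω n) = ∫⁻ x, P x (cylRev ω n) ∂ν) {x₀ : X} {π : (ℕ → Fin k) → X}
    (hπ : ∀ᵐ ω ∂μ, Tendsto (fun n => hIterRev h ω n x₀) atTop (nhds (π ω))) :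
    IsBackwardCoding h p ν μ x₀ π := by
  refine ⟨fun ω n => ?_, hπ⟩
  have hPrev x : P x (cylRev ω n) = ENNReal.ofReal (pIterRev h p ω n x) :=
    (hP x (fun i => ω (n - 1 - i)) n).trans
      (congrArg _ (hIter_eq_hIterRev_and_pIter_eq_pIterRev (fun _ _ => rfl) x).2)
  rw [Measure.real, hμ, lintegral_congr hPrev, integral_eq_lintegral_of_nonneg_ae
    (ae_of_all _ (H.isProbWeight.pIterRev_nonneg ω n))
    (continuous_pIterRev H.continuous_map H.continuous_weight ω n).aestronglyMeasurable]

theorem backward_ergodic_sums_estimate_general {X : Type*} [MetricSpace X] [MeasurableSpace X]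
    [BorelSpace X] {α : ℝ≥0} (hα : 0 < α) {h : Fin k → X → X} {p : Fin k → X → ℝ}
    (hlip : ∃ K, ∀ i, LipschitzWith K (h i))
    (hpholder : ∀ i, ∃ C : ℝ≥0, HolderWith C α (p i))
    (hpbelow : ∃ δ > (0 : ℝ), ∀ i x, δ ≤ p i x) (hpsum : ∀ x, ∑ i, p i x = 1)
    (hcoa : ∃ b > (0 : ℝ), ∀ x y, x ≠ y →
      ∑ j, p j x * Real.log (dist (h j x) (h j y) / dist x y) < -b)
    {ν : Measure X} [IsProbabilityMeasure ν]
    (hinv : ν = ∑ i, Measure.map (h i) (ν.withDensity fun x => ENNReal.ofReal (p i x)))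
    {P : X → Measure (ℕ → Fin k)}
    (hPcyl : ∀ x ω n, P x (cyl ω n) = ENNReal.ofReal (pIter h p ω n x))
    {μm : Measure (ℕ → Fin k)} [IsProbabilityMeasure μm] (hμminv : μm.map seqShift = μm)
    (hμmcyl : ∀ ω n, μm (cyl ω n) = ∫⁻ x, P x (cylRev ω n) ∂ν)
    {x₀ : X} {π : (ℕ → Fin k) → X}
    (hπ : ∀ᵐ ω ∂μm, Tendsto (fun n => hIterRev h ω n x₀) atTop (nhds (π ω)))
    {z : Fin k → X → ℝ} (hzint : ∀ j, Integrable (z j) ν)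
    (hzneg : (∫ x, ∑ j, p j x * z j x ∂ν) < 0) {ε : ℝ} (hε : 0 < ε) :
    ∀ᵐ ω ∂μm, ∃ K > (0 : ℝ), ∀ n : ℕ,
      K⁻¹ * Real.exp ((n : ℝ) * (1 + ε) * (∫ x, ∑ j, p j x * z j x ∂ν))
          ≤ Real.exp (zIterRev h z ω n (π fun i => ω (i + n))) ∧
      Real.exp (zIterRev h z ω n (π fun i => ω (i + n)))
          ≤ K * Real.exp ((n : ℝ) * (1 - ε) * (∫ x, ∑ j, p j x * z j x ∂ν)) := by
  obtain ⟨K, hK⟩ := hlip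
  obtain ⟨δ, hδ, hpδ⟩ := hpbelow
  obtain ⟨b, hb, hcoa⟩ := hcoa
  obtain ⟨s, ρ, C, H⟩ := exists_isContractiveOnAverage hα hK hpholder hδ hpδ hpsum hb hcoa
  have hν : IsStationaryMeasure_s9 h p ν := ⟨fun j => (H.continuous_map j).measurable,
    fun j => (H.continuous_weight j).aemeasurable, hinv.symm⟩
  simp only [mul_assoc]
  exact H.ae_exists_exp_zIterRev_mem_Icc (H.isBackwardCoding hPcyl hμmcyl hπ) hν
    ⟨continuous_seqShift.measurable, hμminv⟩ hzint (by linarith [mul_neg_of_pos_of_neg hε hzneg])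
    (by linarith [mul_neg_of_pos_of_neg hε hzneg])

/-- Birkhoff-type estimate along backward orbits: for `μ₋`-almost every `ω` the ergodic
sums `z_{ω^{-n}}(π(σ^n ω))` grow like `nz`. -/
theorem backward_ergodic_sums_estimate
    (d : ℕ) (hd : 1 ≤ d) (hk : 2 ≤ k) (α : ℝ≥0) (hα0 : 0 < α) (hα1 : α ≤ 1)
    (h : Fin k → EuclideanSpace ℝ (Fin d) → EuclideanSpace ℝ (Fin d))
    (p : Fin k → EuclideanSpace ℝ (Fin d) → ℝ)
    (hsmooth : ∀ i, ContDiff ℝ 1 (h i))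
    (hholder : ∀ i, ∃ C : ℝ≥0, HolderWith C α fun x => Real.log ‖fderiv ℝ (h i) x‖)
    (hlogbdd : ∃ M : ℝ, ∀ i x, |Real.log ‖fderiv ℝ (h i) x‖| ≤ M)
    (hpholder : ∀ i, ∃ C : ℝ≥0, HolderWith C α (p i))
    (hprange : ∀ i x, p i x ∈ Set.Ioo (0 : ℝ) 1)
    (hpbelow : ∃ δ > (0 : ℝ), ∀ i x, δ ≤ p i x)
    (hpsum : ∀ x, ∑ i, p i x = 1)
    (hcoa : ∃ b > (0 : ℝ), ∀ x y, x ≠ y →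
      ∑ j, p j x * Real.log (dist (h j x) (h j y) / dist x y) < -b)
    (ν : Measure (EuclideanSpace ℝ (Fin d))) [IsProbabilityMeasure ν]
    (hinv : ν = ∑ i, Measure.map (h i)
      (ν.withDensity fun x => ENNReal.ofReal (p i x)))
    -- the family of measures `p_x` on the symbol space
    (P : EuclideanSpace ℝ (Fin d) → Measure (ℕ → Fin k))
    (hPprob : ∀ x, IsProbabilityMeasure (P x))
    (hPcyl : ∀ x ω n, P x (cyl ω n) = ENNReal.ofReal (pIter h p ω n x))
    -- the measure `μ₋`, determined by `μ₋(C_{ω^n}) = μ₊(C_{ω^{-n}})`,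
    -- where `μ₊(E) = ∫ p_x(E) dν(x)`
    (μm : Measure (ℕ → Fin k)) [IsProbabilityMeasure μm]
    (hμminv : Measure.map (fun (ω : ℕ → Fin k) i => ω (i + 1)) μm = μm)
    (hμmcyl : ∀ ω n, μm (cyl ω n) = ∫⁻ x, P x (cylRev ω n) ∂ν)
    -- the coding map, defined `μ₋`-a.e.
    (x₀ : EuclideanSpace ℝ (Fin d)) (π : (ℕ → Fin k) → EuclideanSpace ℝ (Fin d))
    (hπ : ∀ᵐ ω ∂μm, Tendsto (fun n => hIterRev h ω n x₀) atTop (nhds (π ω)))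
    -- the observables
    (z : Fin k → EuclideanSpace ℝ (Fin d) → ℝ)
    (hzint : ∀ j, Integrable (z j) ν)
    (hzneg : (∫ x, ∑ j, p j x * z j x ∂ν) < 0) :
    ∀ ε > (0 : ℝ), ∀ᵐ ω ∂μm, ∃ K > (0 : ℝ), ∀ n : ℕ, 1 ≤ n →
      K⁻¹ * Real.exp ((n : ℝ) * (1 + ε) * (∫ x, ∑ j, p j x * z j x ∂ν))
          ≤ Real.exp (zIterRev h z ω n (π fun i => ω (i + n))) ∧
      Real.exp (zIterRev h z ω n (π fun i => ω (i + n)))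
          ≤ K * Real.exp ((n : ℝ) * (1 - ε) * (∫ x, ∑ j, p j x * z j x ∂ν)) := by
  obtain ⟨M, hM⟩ := hlogbdd
  exact fun ε hε => (backward_ergodic_sums_estimate_general hα0
    ⟨_, fun i => lipschitzWith_of_log_norm_fderiv_le ((hsmooth i).differentiable one_ne_zero)
      fun x => le_of_abs_le (hM i x)⟩
    hpholder hpbelow hpsum hcoa hinv hPcyl hμminv hμmcyl hπ hzint hzneg hε).mono
      fun _ ⟨K, hK, hbound⟩ => ⟨K, hK, fun n _ => hbound n⟩
end
end
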